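/- Let n ≥ 2 be an integer and p a prime with p ≥ (2n·n!)². Then there exists b ∈ ℤ_p such that the trinomial Y^n - Y + b is irreducible in ℚ_p[Y] and has a root in the unramified extension of ℚ_p of degree n; hence the degree n unramified extension of ℚ_p is realized by Y^n - Y + b. -/

import Mathlib

open Polynomial

/-- The unramified extension of `ℚ_p` of degree `d`, characterized as the
splitting field of `X^(p^d) - X` over `ℚ_p`. -/
noncomputable def UnramifiedExt (p : ℕ) [Fact p.Prime] (d : ℕ) : Type :=
  ((X : Polynomial ℚ_[p]) ^ (p ^ d) - X).SplittingField

noncomputable instance (p : ℕ) [Fact p.Prime] (d : ℕ) : Field (UnramifiedExt p d) :=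
  inferInstanceAs (Field ((X : Polynomial ℚ_[p]) ^ (p ^ d) - X).SplittingField)

noncomputable instance (p : ℕ) [Fact p.Prime] (d : ℕ) : Algebra ℚ_[p] (UnramifiedExt p d) :=
  inferInstanceAs (Algebra ℚ_[p] ((X : Polynomial ℚ_[p]) ^ (p ^ d) - X).SplittingField)

/-!
The proof reduces to the finite field `𝔽_p` and then counts points on curves by Stepanov's method.

**Finite field.** Write `f = X ^ n - X`. If `f - b` were reducible for every `b ∈ 𝔽_p`, every
`α ∈ 𝔽̄_p` with `f(α) ∈ 𝔽_p` would lie in a Frobenius orbit of length at most `n - 1`. Outside the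
at most `n - 1` critical values each `b` has `n` distinct preimages, so there are at least
`n (p - n + 1)` such noncritical `α`. On the other hand, for every length `e + 1 ≤ n - 1` the number
of `α` with orbit of exactly that length is at most `p + O(√p)` (at most `p` for `e = 0`), which
gives a total of at most `(n - 1) p + O(√p)`. The hypothesis on `p` makes this a contradiction
(`GenPt.card_bound`, `num_final`, `exists_irreducible_zmod`).

**Point count.** An `α` with orbit of length `e + 1` gives the point `(α, α ^ p, …, α ^ (p ^ e))` on
the curve of `(e + 1)`-tuples of distinct elements with a common value of `f`. There raising
coordinates to the `p`-th power agrees with shifting them cyclically. Linear algebra produces a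
function `∑ c u v ^ p` with `u, v` of small degree, nonzero on the curve, which vanishes to a high
order `M` at all these points, because `v ^ p` may be replaced there by the shift of `v`
(`GenPt.stepanov_aux`). Multiplicities are measured by a polynomial derivation `D` tangent to the
curve, and a function of degree `d` has about `(n - 1) ⋯ (n - e) d` zeros at most
(`GenPt.zero_lemma`, `GenPt.zeros`). That the function is nonzero rests on `frob_indep`: a space of
functions of order of vanishing `< p` is linearly disjoint from `p`-th powers.

**Irreducibility of the curve.** What the count needs is a generic point of the curve, realised here
by `n` power series with the same value of `f` whose algebraic relations are stable under all
permutations (`GenPt`). The relations are stable under a `2`-transitive set of permutations, as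
`X ^ (n - 1) - (1 + T + ⋯ + T ^ (n - 1))` is irreducible by Eisenstein (`two_trans`), and under a
transposition, as exactly two roots come together at a critical value of `f`
(`exists_series_roots`). Conjugating gives all transpositions (`exists_genPt`).

**Lifting.** For a monic `g ∈ ℤ_p[Y]` of degree `n` with irreducible reduction, `g` is irreducible
over `ℚ_p`. Hensel's lemma in the `p`-adically complete ring `ℤ_p[Y]/(g)` lifts all `p ^ n` residues
to roots of `X ^ (p ^ n) - X` (`exists_teichmuller`), and the lift of the class of `Y` generates
`ℚ_p[Y]/(g)`. So this field is the splitting field of `X ^ (p ^ n) - X` (`splits_and_generates`).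
-/

namespace Trinom

/-! ### Standard monomials modulo the relations between roots -/

/-- The variable `x_j`, with the junk value `0` when `j > e`. -/
noncomputable def xv (K : Type*) [Field K] (e j : ℕ) : MvPolynomial (Fin (e + 1)) K :=
  if h : j < e + 1 then MvPolynomial.X ⟨j, h⟩ else 0

/-- The quotient of `X ^ n - X - (x_0 ^ n - x_0)` by `(X - x_0) ⋯ (X - x_{j-1})`, obtained by successive
Euclidean division (remainders are dropped). At a tuple of distinct roots it becomes the polynomial
of the remaining `n - j` roots. -/
noncomputable def relQ (K : Type*) [Field K] (n e : ℕ) : ℕ → (MvPolynomial (Fin (e + 1)) K)[X]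
  | 0 => X ^ n - X - C (xv K e 0 ^ n - xv K e 0)
  | j + 1 => relQ K n e j /ₘ (X - C (xv K e j))

section
variable {K : Type*} [Field K] {n e : ℕ}

lemma relQ_zero_natDegree_monic (hn : 2 ≤ n) :
    (relQ K n e 0).Monic ∧ (relQ K n e 0).natDegree = n := by
  have h : relQ K n e 0 = X ^ n - (X + C (xv K e 0 ^ n - xv K e 0)) := by simp [relQ, sub_sub]
  rw [h]
  have hd : (X + C (xv K e 0 ^ n - xv K e 0) : (MvPolynomial (Fin (e + 1)) K)[X]).degree <
      (n : WithBot ℕ) := by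
    rw [degree_X_add_C]; exact_mod_cast hn
  refine ⟨monic_X_pow_sub hd, ?_⟩
  rw [natDegree_sub_eq_left_of_natDegree_lt, natDegree_X_pow]
  rw [natDegree_X_add_C, natDegree_X_pow]; omega

lemma relQ_monic (hn : 2 ≤ n) (j : ℕ) (hj : j ≤ n) :
    (relQ K n e j).Monic ∧ (relQ K n e j).natDegree = n - j := by
  induction j with
  | zero => simpa using relQ_zero_natDegree_monic hn
  | succ j ih =>
    obtain ⟨hm, hd⟩ := ih (by omega)
    refine ⟨?_, ?_⟩
    · rw [relQ, Monic, leadingCoeff_divByMonic_X_sub_C]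
      · exact hm
      · rw [degree_eq_natDegree hm.ne_zero, hd]
        exact_mod_cast (by omega : n - j ≠ 0)
    · rw [relQ, natDegree_divByMonic _ (monic_X_sub_C _), natDegree_X_sub_C, hd]; omega

lemma xv_totalDegree (j : ℕ) : (xv K e j).totalDegree ≤ 1 := by
  unfold xv; split_ifs
  · simp
  · simp

lemma xv_mem_supported (j : ℕ) :
    xv K e j ∈ MvPolynomial.supported K {l : Fin (e + 1) | l.val < j + 1} := by
  unfold xv; split_ifs with h
  · exact MvPolynomial.X_mem_supported.2 (by simp)
  · exact zero_mem _

/-- The coefficients of `relQ` respect the grading in which `X` and all `x_l` have degree one, and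
`relQ_j` involves only `x_0, …, x_{j-1}`. For `j = 0` the constant coefficient is an exception. -/
lemma relQ_coeff (hn : 2 ≤ n) (j : ℕ) (hj : j ≤ n) (k : ℕ) (hk : 1 ≤ k ∨ 1 ≤ j) :
    ((relQ K n e j).coeff k).totalDegree ≤ n - j - k ∧
    (relQ K n e j).coeff k ∈ MvPolynomial.supported K {l : Fin (e + 1) | l.val < j} := by
  induction j generalizing k with
  | zero =>
    have hk1 : 1 ≤ k := by omega
    have : (relQ K n e 0).coeff k = (if k = n then 1 else 0) - (if 1 = k then 1 else 0) := by
      rw [relQ, coeff_sub, coeff_sub, coeff_X_pow, coeff_X, coeff_C, if_neg (by omega : ¬ k = 0),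
        sub_zero]
    rw [this]
    constructor
    · split_ifs <;> simp [-MvPolynomial.totalDegree_neg, MvPolynomial.totalDegree_neg]
    · refine sub_mem ?_ ?_ <;> split_ifs <;> first | exact one_mem _ | exact zero_mem _
  | succ j ih =>
    have hc : (relQ K n e (j + 1)).coeff k = ∑ i ∈ Finset.Icc (k + 1) (n - j),
        xv K e j ^ (i - (k + 1)) * (relQ K n e j).coeff i := by
      rw [relQ, coeff_divByMonic_X_sub_C, (relQ_monic hn j (by omega)).2]
    rw [hc]
    constructor
    · refine (MvPolynomial.totalDegree_finsetSum _ _).trans (Finset.sup_le fun i hi => ?_)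
      rw [Finset.mem_Icc] at hi
      refine (MvPolynomial.totalDegree_mul _ _).trans ?_
      have h1 := (ih (by omega) i (by omega)).1
      have h2 : (xv K e j ^ (i - (k + 1))).totalDegree ≤ (i - (k + 1)) * 1 :=
        (MvPolynomial.totalDegree_pow _ _).trans (Nat.mul_le_mul_left _ (xv_totalDegree j))
      omega
    · refine sum_mem fun i hi => ?_
      rw [Finset.mem_Icc] at hi
      refine mul_mem (pow_mem (xv_mem_supported j) _) ?_
      exact MvPolynomial.supported_mono (fun l hl => by
        simp only [Set.mem_ofPred_eq] at hl ⊢; omega) (ih (by omega) i (by omega)).2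

/-- The relation of degree `n - j` in `x_j` over `x_0, …, x_{j-1}` satisfied by the `j`-th root. -/
noncomputable def rel (K : Type*) [Field K] (n e j : ℕ) : MvPolynomial (Fin (e + 1)) K :=
  (relQ K n e j).eval (xv K e j)

lemma rel_aeval_eq_zero {F : Type*} [CommRing F] [IsDomain F] [Algebra K F]
    (z : Fin (e + 1) → F)
    (hz : Function.Injective z) (hf : ∀ k, z k ^ n - z k = z 0 ^ n - z 0) (j : ℕ) (hj : j < e + 1) :
    MvPolynomial.aeval z (rel K n e j) = 0 := by
  have key : ∀ j ≤ e + 1, ∀ l : Fin (e + 1), j ≤ l.val →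
      ((relQ K n e j).map (MvPolynomial.aeval (R := K) z).toRingHom).eval (z l) = 0 := by
    intro j
    induction j with
    | zero =>
      intro _ l _
      have h0 : (MvPolynomial.aeval (R := K) z).toRingHom (xv K e 0) = z 0 := by
        simp [xv]
      simp only [relQ, Polynomial.map_sub, Polynomial.map_pow, map_X, map_C, map_sub, map_pow,
        eval_sub, eval_pow, eval_X, eval_C, h0]
      rw [hf l]; ring
    | succ j ih =>
      intro hj l hl
      have hxj : (MvPolynomial.aeval (R := K) z).toRingHom (xv K e j) = z ⟨j, by omega⟩ := by
        have : j < e + 1 := by omega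
        simp only [xv, this, dite_true]
        simp
      have h1 := ih (by omega) ⟨j, by omega⟩ le_rfl
      have h2 := ih (by omega) l (by omega)
      have h3 : (relQ K n e (j+1)).map (MvPolynomial.aeval (R := K) z).toRingHom =
          ((relQ K n e j).map (MvPolynomial.aeval (R := K) z).toRingHom) /ₘ
            (X - C (z ⟨j, by omega⟩)) := by
        rw [relQ, map_divByMonic _ (monic_X_sub_C _)]
        simp only [Polynomial.map_sub, map_X, map_C, hxj]
      rw [h3]
      have h4 := mul_divByMonic_eq_iff_isRoot.2 h1
      rw [← h4, eval_mul] at h2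
      rcases mul_eq_zero.1 h2 with h | h
      · exfalso
        simp only [eval_sub, eval_X, eval_C, sub_eq_zero] at h
        have := hz h
        rw [Fin.ext_iff] at this
        simp at this
        omega
      · exact h
  have := key j (by omega) ⟨j, hj⟩ le_rfl
  have hxj : (MvPolynomial.aeval (R := K) z).toRingHom (xv K e j) = z ⟨j, by omega⟩ := by
    simp only [xv, hj, dite_true]
    simp
  rw [← hxj, eval_map_apply] at this
  exact this

/-- The ideal generated by `rel 1, …, rel e`, the relations between `e + 1` distinct roots of
`X ^ n - X - t` with `t` indeterminate. -/
noncomputable def relIdeal (K : Type*) [Field K] (n e : ℕ) : Ideal (MvPolynomial (Fin (e + 1)) K) :=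
  Ideal.span {g | ∃ j, 1 ≤ j ∧ j < e + 1 ∧ g = rel K n e j}

lemma relIdeal_aeval {F : Type*} [CommRing F] [IsDomain F] [Algebra K F]
    (z : Fin (e + 1) → F)
    (hz : Function.Injective z) (hf : ∀ k, z k ^ n - z k = z 0 ^ n - z 0)
    {g : MvPolynomial (Fin (e + 1)) K} (hg : g ∈ relIdeal K n e) :
    MvPolynomial.aeval z g = 0 := by
  have : relIdeal K n e ≤ RingHom.ker (MvPolynomial.aeval (R := K) z) := by
    rw [relIdeal, Ideal.span_le]
    rintro _ ⟨j, -, hj, rfl⟩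
    exact rel_aeval_eq_zero z hz hf j hj
  exact this hg

/-- Exponents of degree at most `d` with `μ_l < n - l` for every `l ≥ max 1 j`. For `j = 1` these are
the standard monomials modulo `relIdeal`; larger `j` impose the condition on fewer variables. -/
def stdExp (n e j d : ℕ) : Set (Fin (e + 1) →₀ ℕ) :=
  {μ | μ.degree ≤ d ∧ ∀ l : Fin (e + 1), 1 ≤ l.val → j ≤ l.val → μ l < n - l.val}

/-- One step of the reduction: `rel j` rewrites high powers of `x_j` without raising the total degree
or touching the variables beyond `x_j`. -/
lemma std_step (hn : 2 ≤ n) (he : e + 1 ≤ n) (j d : ℕ) (hj : 1 ≤ j) (hje : j < e + 1)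
    (m : ℕ) (μ : Fin (e + 1) →₀ ℕ) (hμ : μ ∈ stdExp n e (j + 1) d) (hm : μ ⟨j, hje⟩ = m) :
    MvPolynomial.monomial μ (1 : K) ∈ MvPolynomial.restrictSupport K (stdExp n e j d) ⊔
      (relIdeal K n e).restrictScalars K := by
  induction m using Nat.strong_induction_on generalizing μ with
  | _ m ih =>
  by_cases hlt : m < n - j
  · apply Submodule.mem_sup_left
    rw [MvPolynomial.monomial_mem_restrictSupport]
    left
    refine ⟨hμ.1, fun l h1 h2 => ?_⟩
    rcases eq_or_lt_of_le h2 with h | h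
    · have : l = ⟨j, hje⟩ := Fin.ext h.symm
      subst this; simpa [hm] using hlt
    · exact hμ.2 l h1 h
  · push Not at hlt
    set J : Fin (e + 1) := ⟨j, hje⟩ with hJ
    obtain ⟨hmon, hdeg⟩ := relQ_monic (K := K) (e := e) hn j (by omega)
    set μ' := μ - Finsupp.single J (n - j) with hμ'
    have hle : Finsupp.single J (n - j) ≤ μ := by
      rw [Finsupp.single_le_iff, hm]; exact hlt
    have hadd : μ = μ' + Finsupp.single J (n - j) := (tsub_add_cancel_of_le hle).symm
    have hxj : xv K e j = MvPolynomial.X J := by simp [xv, hje, hJ]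
    have hrel : rel K n e j = MvPolynomial.X J ^ (n - j) +
        ∑ k ∈ Finset.range (n - j), (relQ K n e j).coeff k * MvPolynomial.X J ^ k := by
      have : (relQ K n e j).coeff (n - j) = 1 := by rw [← hdeg]; exact hmon
      rw [rel, hxj, eval_eq_sum_range, hdeg, Finset.sum_range_succ, this, one_mul]
      exact add_comm _ _
    have hmono : MvPolynomial.monomial μ (1 : K) = MvPolynomial.monomial μ' 1 * rel K n e j -
        ∑ k ∈ Finset.range (n - j), MvPolynomial.monomial μ' 1 *
          ((relQ K n e j).coeff k * MvPolynomial.X J ^ k) := by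
      rw [hrel, mul_add, Finset.mul_sum, add_sub_cancel_right, MvPolynomial.X_pow_eq_monomial,
        MvPolynomial.monomial_mul, ← hadd, one_mul]
    rw [hmono]
    refine sub_mem (Submodule.mem_sup_right ?_) (sum_mem fun k hk => ?_)
    · exact Ideal.mul_mem_left _ _ (Ideal.subset_span ⟨j, hj, hje, rfl⟩)
    · rw [Finset.mem_range] at hk
      obtain ⟨hcd, hcs⟩ := relQ_coeff (K := K) (e := e) hn j (by omega) k (Or.inr hj)
      set c := (relQ K n e j).coeff k with hc
      have hexp : MvPolynomial.monomial μ' (1 : K) * (c * MvPolynomial.X J ^ k) =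
          ∑ ν ∈ c.support, c.coeff ν •
            MvPolynomial.monomial (μ' + ν + Finsupp.single J k) (1 : K) := by
        conv_lhs => rw [c.as_sum]
        rw [Finset.sum_mul, Finset.mul_sum]
        refine Finset.sum_congr rfl fun ν _ => ?_
        rw [MvPolynomial.X_pow_eq_monomial, MvPolynomial.monomial_mul, MvPolynomial.monomial_mul,
          MvPolynomial.smul_monomial]
        congr 1
        · simp [add_assoc]
        · simp
      rw [hexp]
      refine sum_mem fun ν hν => Submodule.smul_mem _ _ ?_
      have hνdeg : ν.degree ≤ n - j - k := by
        refine le_trans ?_ hcd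
        have := MvPolynomial.le_totalDegree hν
        rwa [Finsupp.degree_eq_sum, ← Finsupp.sum_fintype ν (fun _ a => a) (by simp)]
      have hνsupp : ∀ l : Fin (e + 1), j ≤ l.val → ν l = 0 := by
        intro l hl
        by_contra hne
        have h1 : l ∈ c.vars := MvPolynomial.mem_vars_iff_mem_support l |>.2 ⟨ν, hν, Finsupp.mem_support_iff.2 hne⟩
        have h2 := (MvPolynomial.mem_supported.1 hcs) h1
        simp only [Set.mem_ofPred_eq] at h2
        omega
      have hdμ : μ.degree = μ'.degree + (n - j) := by
        rw [hadd, map_add, Finsupp.degree_single]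
      have hval : (μ' + ν + Finsupp.single J k) J = m - (n - j) + k := by
        simp [hμ', hνsupp J le_rfl, hm]
      refine ih (m - (n - j) + k) (by omega) _ ⟨?_, fun l h1 h2 => ?_⟩ hval
      · rw [map_add, map_add, Finsupp.degree_single]
        have := hμ.1
        omega
      · have hne : J ≠ l := by
          intro h; rw [← h] at h2; simp [hJ] at h2
        have := hμ.2 l h1 h2
        simp only [Finsupp.coe_add, Pi.add_apply, Finsupp.single_apply, hne, if_false, add_zero,
          hνsupp l (by omega), hμ', Finsupp.coe_tsub, Pi.sub_apply, Nat.sub_zero]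
        exact this

/-- Modulo `relIdeal`, a polynomial of degree at most `d` is a combination of standard monomials of
degree at most `d`. -/
lemma std_reduce (hn : 2 ≤ n) (he : e + 1 ≤ n) (d : ℕ) (g : MvPolynomial (Fin (e + 1)) K)
    (hg : g.totalDegree ≤ d) :
    g ∈ MvPolynomial.restrictSupport K (stdExp n e 1 d) ⊔ (relIdeal K n e).restrictScalars K := by
  have key : ∀ m ≤ e, ∀ g ∈ MvPolynomial.restrictSupport K (stdExp n e (m + 1) d),
      g ∈ MvPolynomial.restrictSupport K (stdExp n e 1 d) ⊔
        (relIdeal K n e).restrictScalars K := by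
    intro m
    induction m with
    | zero => intro _ g hg; exact Submodule.mem_sup_left hg
    | succ m ih =>
      intro hm g hg
      have h1 : MvPolynomial.restrictSupport K (stdExp n e (m + 1 + 1) d) ≤
          MvPolynomial.restrictSupport K (stdExp n e (m + 1) d) ⊔
            (relIdeal K n e).restrictScalars K := by
        rw [MvPolynomial.restrictSupport_eq_span, Submodule.span_le]
        rintro _ ⟨μ, hμ, rfl⟩
        exact std_step hn he (m + 1) d (by omega) (by omega) _ μ hμ rfl
      have h2 : MvPolynomial.restrictSupport K (stdExp n e (m + 1) d) ⊔
          (relIdeal K n e).restrictScalars K ≤ MvPolynomial.restrictSupport K (stdExp n e 1 d) ⊔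
          (relIdeal K n e).restrictScalars K :=
        sup_le (fun g hg => ih (by omega) g hg) le_sup_right
      exact h2 (h1 hg)
  refine key e le_rfl g ?_
  rw [MvPolynomial.mem_restrictSupport_iff]
  intro μ hμ
  refine ⟨?_, fun l _ h => by omega⟩
  refine le_trans ?_ hg
  have := MvPolynomial.le_totalDegree hμ
  rwa [Finsupp.degree_eq_sum, ← Finsupp.sum_fintype μ (fun _ a => a) (by simp)]

end

/-! ### Generic points and dimension counts -/

/-- A generic point of the curve of `n`-tuples of distinct elements with the same value of
`X ^ n - X`: power series `y_0, …, y_{n-1}` with `y_0 = c + X`, whose algebraic relations over `K`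
are stable under transpositions. The family is indexed by `ℕ`, but `y k` is constrained only for
`k < n`. -/
structure GenPt (K : Type*) [Field K] (n : ℕ) where
  y : ℕ → PowerSeries K
  c : K
  inj : ∀ a < n, ∀ b < n, y a = y b → a = b
  y_zero : y 0 = PowerSeries.C c + PowerSeries.X
  root : ∀ k < n, y k ^ n - y k = y 0 ^ n - y 0
  symm : ∀ a < n, ∀ b < n, ∀ g : MvPolynomial ℕ K, ↑g.vars ⊆ Set.Iio n →
    MvPolynomial.aeval y g = 0 →
    MvPolynomial.aeval (fun k => y (Equiv.swap a b k)) g = 0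

section
variable {K : Type*} [Field K] {n e : ℕ}

lemma aeval_C_add_X_eq_zero (c : K) (h : K[X])
    (hh : aeval (PowerSeries.C c + PowerSeries.X : PowerSeries K) h = 0) : h = 0 := by
  have h1 : aeval (PowerSeries.C c + PowerSeries.X : PowerSeries K) h =
      ((h.comp (C c + X) : K[X]) : PowerSeries K) := by
    have : (PowerSeries.C c + PowerSeries.X : PowerSeries K) =
        Polynomial.coeToPowerSeries.algHom (A := K) (C c + X) := by
      simp [Polynomial.coeToPowerSeries.algHom_apply]
    rw [this, aeval_algHom_apply, Polynomial.coeToPowerSeries.algHom_apply]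
    simp [comp, aeval_def, algebraMap_eq]
  rw [h1, Polynomial.coe_eq_zero_iff] at hh
  have h2 : (h.comp (C c + X)).comp (X - C c) = 0 := by rw [hh, zero_comp]
  rwa [comp_assoc, add_comp, C_comp, X_comp, add_sub_cancel, comp_X] at h2

namespace GenPt
variable (G : GenPt K n)

/-- The first `e + 1` coordinates of the generic point. -/
def z (e : ℕ) : Fin (e + 1) → PowerSeries K := fun k => G.y k.val

lemma z_inj (he : e + 1 ≤ n) : Function.Injective (G.z e) := fun a b h =>
  Fin.ext (G.inj _ (by omega) _ (by omega) h)

lemma z_root (he : e + 1 ≤ n) (k : Fin (e + 1)) :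
    G.z e k ^ n - G.z e k = G.z e 0 ^ n - G.z e 0 := G.root _ (by omega)

lemma z_symm (he : e + 1 ≤ n) (g : MvPolynomial (Fin (e + 1)) K)
    (hg : MvPolynomial.aeval (G.z e) g = 0) (a b : ℕ) (ha : a < n) (hb : b < n) :
    MvPolynomial.aeval (fun k : Fin (e + 1) => G.y (Equiv.swap a b k.val)) g = 0 := by
  have := G.symm a ha b hb (MvPolynomial.rename (fun k : Fin (e + 1) => k.val) g) ?_ ?_
  · rwa [MvPolynomial.aeval_rename] at this
  · intro i hi
    have := MvPolynomial.vars_rename _ _ (Finset.mem_coe.1 hi)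
    rw [Finset.mem_image] at this
    obtain ⟨k, -, rfl⟩ := this
    exact lt_of_lt_of_le k.2 he
  · rw [MvPolynomial.aeval_rename]; exact hg

/-- Induction on the number of variables. Viewed as a polynomial in its last variable `x_{j+1}`, of
degree less than `n - (j + 1)`, a relation has by symmetry the `n - (j + 1)` roots
`y_{j+1}, …, y_{n-1}`, so its coefficients are relations in fewer variables. -/
lemma indep_aux (he : e + 1 ≤ n) (j : ℕ) (hj : j ≤ e) (g : MvPolynomial (Fin (e + 1)) K)
    (hg : ∀ μ ∈ g.support, ∀ l : Fin (e + 1), 1 ≤ l.val → μ l < n - l.val)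
    (hgj : ∀ μ ∈ g.support, ∀ l : Fin (e + 1), j < l.val → μ l = 0)
    (hz : MvPolynomial.aeval (G.z e) g = 0) : g = 0 := by
  induction j generalizing g with
  | zero =>
    set h : K[X] := ∑ μ ∈ g.support, monomial (μ 0) (g.coeff μ) with hh
    have hdet : ∀ μ ∈ g.support, μ = Finsupp.single 0 (μ 0) := by
      intro μ hμ
      ext l
      by_cases hl : l = 0
      · subst hl; simp
      · rw [hgj μ hμ l (Nat.pos_of_ne_zero fun h => hl (Fin.ext h)), Finsupp.single_eq_of_ne hl]
    have h0 : aeval (G.z e 0) h = 0 := by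
      rw [hh, map_sum]
      rw [g.as_sum, map_sum] at hz
      rw [← hz]
      refine Finset.sum_congr rfl fun μ hμ => ?_
      rw [aeval_monomial, MvPolynomial.aeval_monomial]
      conv_rhs => rw [hdet μ hμ]
      rw [Finsupp.prod_single_index (by simp)]
      congr 2
      rw [← hdet μ hμ]
    have h1 : h = 0 := by
      rw [show G.z e 0 = _ from G.y_zero] at h0
      exact aeval_C_add_X_eq_zero _ _ h0
    ext μ
    by_contra hne
    have hμ : μ ∈ g.support := MvPolynomial.mem_support_iff.2 hne
    have h2 : h.coeff (μ 0) = g.coeff μ := by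
      rw [hh, finsetSum_coeff, Finset.sum_eq_single μ]
      · simp
      · intro ν hν hne'
        rw [coeff_monomial, if_neg]
        intro h
        apply hne'
        rw [hdet μ hμ, hdet ν hν, h]
      · exact fun h => absurd hμ h
    rw [h1] at h2
    exact hne (by simpa using h2.symm)
  | succ j ih =>
    set J : Fin (e + 1) := ⟨j + 1, by omega⟩ with hJ
    -- the coefficients of `g` as a polynomial in `X_J`
    let gk : ℕ → MvPolynomial (Fin (e + 1)) K := fun k =>
      ∑ μ ∈ g.support with μ J = k, MvPolynomial.monomial (μ.erase J) (g.coeff μ)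
    have hgksupp : ∀ k, ∀ ν ∈ (gk k).support, ∃ μ ∈ g.support, ν = μ.erase J := by
      intro k ν hν
      have := MvPolynomial.support_sum hν
      simp only [Finset.mem_biUnion, Finset.mem_filter] at this
      obtain ⟨μ, ⟨hμ, -⟩, h⟩ := this
      exact ⟨μ, hμ, by simpa using MvPolynomial.support_monomial_subset h⟩
    have hgkJ : ∀ k, ∀ ν ∈ (gk k).support, ∀ l : Fin (e + 1), j < l.val → ν l = 0 := by
      intro k ν hν l hl
      obtain ⟨μ, hμ, rfl⟩ := hgksupp k ν hν
      by_cases hlJ : l = J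
      · subst hlJ; simp
      · rw [Finsupp.erase_ne hlJ]
        refine hgj μ hμ l ?_
        have : l.val ≠ j + 1 := fun h => hlJ (Fin.ext h)
        omega
    -- swapping `y_{j+1}` with any later `y_l` gives the same relation at `y_l`
    have hev : ∀ l, j + 1 ≤ l → l < n → ∑ k ∈ Finset.range (n - (j + 1)),
        MvPolynomial.aeval (G.z e) (gk k) * G.y l ^ k = 0 := by
      intro l hl hln
      have h1 := G.z_symm he g hz (j + 1) l (by omega) hln
      set w : Fin (e + 1) → PowerSeries K := fun k => G.y (Equiv.swap (j + 1) l k.val) with hw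
      have hwJ : w J = G.y l := by simp [hw, hJ]
      have hgz : ∀ k, MvPolynomial.aeval w (gk k) = MvPolynomial.aeval (G.z e) (gk k) := by
        intro k
        apply MvPolynomial.eval₂Hom_congr' rfl _ rfl
        intro i hi _
        rw [MvPolynomial.mem_vars_iff_mem_support] at hi
        obtain ⟨ν, hν, hi⟩ := hi
        have hij : i.val ≤ j := by
          by_contra hcon
          push Not at hcon
          exact (Finsupp.mem_support_iff.1 hi) (hgkJ k ν hν i hcon)
        simp only [hw, z]
        rw [Equiv.swap_apply_of_ne_of_ne (by omega) (by omega)]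
      rw [g.as_sum, map_sum] at h1
      rw [← Finset.sum_fiberwise_of_maps_to (t := Finset.range (n - (j + 1))) (g := fun μ => μ J)
        (fun μ hμ => Finset.mem_range.2 (hg μ hμ J (by simp [hJ])))] at h1
      rw [← h1]
      refine Finset.sum_congr rfl fun k _ => ?_
      rw [← hgz, map_sum, Finset.sum_mul]
      refine Finset.sum_congr rfl fun μ hμ => ?_
      rw [Finset.mem_filter] at hμ
      rw [← hwJ, MvPolynomial.aeval_monomial, MvPolynomial.aeval_monomial, mul_assoc,
        Finsupp.prod_fintype _ _ (by simp), Finsupp.prod_fintype _ _ (by simp),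
        ← Finset.mul_prod_erase Finset.univ _ (Finset.mem_univ J),
        ← Finset.mul_prod_erase Finset.univ (fun i => w i ^ μ i) (Finset.mem_univ J)]
      simp only [Finsupp.erase_same, pow_zero, one_mul, hμ.2]
      rw [mul_comm (w J ^ k)]
      congr 2
      refine Finset.prod_congr rfl fun i hi => ?_
      rw [Finsupp.erase_ne (Finset.ne_of_mem_erase hi)]
    -- a polynomial with more roots than its degree
    let P : (PowerSeries K)[X] := ∑ k ∈ Finset.range (n - (j + 1)),
      monomial k (MvPolynomial.aeval (G.z e) (gk k))
    have hPcoeff : ∀ k < n - (j + 1), P.coeff k = MvPolynomial.aeval (G.z e) (gk k) := by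
      intro k hk
      simp only [P, finsetSum_coeff, coeff_monomial]
      rw [Finset.sum_ite_eq' (Finset.range _)]
      simp [hk]
    have hP : P = 0 := by
      refine eq_zero_of_natDegree_lt_card_of_eval_eq_zero (R := PowerSeries K) P
        (ι := Fin (n - (j + 1)))
        (f := fun i => G.y (j + 1 + i.val)) ?_ ?_ ?_
      · intro a b hab
        have := G.inj _ (by omega) _ (by omega) hab
        exact Fin.ext (by omega)
      · intro i
        have := hev (j + 1 + i.val) (by omega) (by omega)
        simp only [P, eval_finsetSum, eval_monomial]
        exact this
      · rw [Fintype.card_fin]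
        have : P.natDegree ≤ n - (j + 1) - 1 := natDegree_sum_le_of_forall_le _ _ fun k hk => by
          rw [Finset.mem_range] at hk
          exact (natDegree_monomial_le _).trans (by omega)
        omega
    have hgk0 : ∀ k < n - (j + 1), gk k = 0 := by
      intro k hk
      refine ih (by omega) _ ?_ (hgkJ k) ?_
      · intro ν hν l hl
        obtain ⟨μ, hμ, rfl⟩ := hgksupp k ν hν
        by_cases hlJ : l = J
        · subst hlJ; simp; omega
        · rw [Finsupp.erase_ne hlJ]; exact hg μ hμ l hl
      · rw [← hPcoeff k hk, hP, coeff_zero]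
    ext μ
    by_contra hne
    have hμ : μ ∈ g.support := MvPolynomial.mem_support_iff.2 hne
    have h2 : (gk (μ J)).coeff (μ.erase J) = g.coeff μ := by
      simp only [gk, MvPolynomial.coeff_sum]
      rw [Finset.sum_eq_single μ]
      · simp
      · intro ν hν hne'
        rw [MvPolynomial.coeff_monomial, if_neg]
        intro h
        apply hne'
        rw [Finset.mem_filter] at hν
        rw [← Finsupp.single_add_erase J ν, ← Finsupp.single_add_erase J μ, h, hν.2]
      · exact fun h => h.elim (Finset.mem_filter.2 ⟨hμ, rfl⟩)
    rw [hgk0 _ (hg μ hμ J (by simp [hJ]))] at h2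
    exact hne (by simpa using h2.symm)

/-- Standard monomials are linearly independent at the generic point. -/
lemma indep (he : e + 1 ≤ n) (g : MvPolynomial (Fin (e + 1)) K)
    (hg : ∀ μ ∈ g.support, ∀ l : Fin (e + 1), 1 ≤ l.val → μ l < n - l.val)
    (hz : MvPolynomial.aeval (G.z e) g = 0) : g = 0 :=
  G.indep_aux he e le_rfl g hg (fun _ _ l hl => by omega) hz

/-- The kernel of evaluation at the generic point is contained in `relIdeal`. -/
lemma mem_relIdeal (hn : 2 ≤ n) (he : e + 1 ≤ n) (g : MvPolynomial (Fin (e + 1)) K)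
    (hz : MvPolynomial.aeval (G.z e) g = 0) : g ∈ relIdeal K n e := by
  obtain ⟨s, hs, t, ht, rfl⟩ := Submodule.mem_sup.1 (std_reduce hn he _ g le_rfl)
  have ht' : t ∈ relIdeal K n e := ht
  have h1 := relIdeal_aeval (G.z e) (G.z_inj he) (G.z_root he) ht'
  rw [map_add, h1, add_zero] at hz
  have : s = 0 := by
    refine G.indep he s (fun μ hμ l hl => ?_) hz
    exact ((MvPolynomial.mem_restrictSupport_iff K).1 hs (Finset.mem_coe.2 hμ)).2 l hl hl
  rw [this, zero_add]; exact ht'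

end GenPt

/-- Standard exponents `μ` with `μ_0 ≤ a` and `μ_l < n - l` for `l ≥ 1`. -/
noncomputable def box (n e a : ℕ) : Finset (Fin (e + 1) →₀ ℕ) :=
  (Fintype.piFinset fun l : Fin (e + 1) =>
    Finset.range (if l = 0 then a + 1 else n - l.val)).map
      Finsupp.equivFunOnFinite.symm.toEmbedding

/-- The degree `(n - 1) ⋯ (n - e)` of the curve of `(e + 1)`-tuples over the line with coordinate
`x_0`. -/
def rk (n e : ℕ) : ℕ := ∏ l : Fin e, (n - (l.val + 1))

lemma mem_box {a : ℕ} {μ : Fin (e + 1) →₀ ℕ} :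
    μ ∈ box n e a ↔ μ 0 ≤ a ∧ ∀ l : Fin (e + 1), 1 ≤ l.val → μ l < n - l.val := by
  rw [box, Finset.mem_map_equiv, Fintype.mem_piFinset]
  simp only [Equiv.symm_symm, Finsupp.equivFunOnFinite_apply, Finset.mem_range]
  constructor
  · intro h
    refine ⟨by simpa [Nat.lt_succ_iff] using h 0, fun l hl => ?_⟩
    have := h l
    rwa [if_neg (by rintro rfl; simp at hl)] at this
  · rintro ⟨h0, h⟩ l
    split_ifs with hl
    · subst hl; omega
    · exact h l (Nat.pos_of_ne_zero fun h => hl (Fin.ext h))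

lemma card_box (a : ℕ) : (box n e a).card = rk n e * (a + 1) := by
  rw [box, Finset.card_map, Fintype.card_piFinset, Fin.prod_univ_succ]
  simp [rk, mul_comm]

lemma box_degree (he : e + 1 ≤ n) {a : ℕ} {μ : Fin (e + 1) →₀ ℕ} (hμ : μ ∈ box n e a) :
    μ.degree ≤ a + (n - 1) * (n - 2) / 2 := by
  rw [mem_box] at hμ
  rw [Finsupp.degree_eq_sum, Fin.sum_univ_succ]
  refine add_le_add hμ.1 ?_
  have h1 : ∀ l : Fin e, μ l.succ ≤ n - 2 - l.val := fun l => by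
    have := hμ.2 l.succ (by simp)
    simp only [Fin.val_succ] at this
    omega
  calc _ ≤ ∑ l : Fin e, (n - 2 - l.val) := Finset.sum_le_sum fun l _ => h1 l
    _ = ∑ l ∈ Finset.range e, (n - 2 - l) := Fin.sum_univ_eq_sum_range (fun l => n - 2 - l) e
    _ ≤ ∑ l ∈ Finset.range (n - 1), (n - 2 - l) :=
      Finset.sum_le_sum_of_subset (Finset.range_subset_range.2 (by omega))
    _ = ∑ l ∈ Finset.range (n - 1), l := by
      rw [← Finset.sum_range_reflect (fun l => l) (n - 1)]
      exact Finset.sum_congr rfl fun l _ => by omega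
    _ = _ := by rw [Finset.sum_range_id]; rfl

namespace GenPt
variable (G : GenPt K n)

/-- The space of values at the generic point of the polynomials of degree at most `d`. -/
noncomputable def W (e d : ℕ) : Submodule K (PowerSeries K) :=
  (MvPolynomial.restrictTotalDegree (Fin (e + 1)) K d).map
    (MvPolynomial.aeval (R := K) (G.z e)).toLinearMap

lemma aeval_mem_W {d : ℕ} {g : MvPolynomial (Fin (e + 1)) K} (hg : g.totalDegree ≤ d) :
    MvPolynomial.aeval (G.z e) g ∈ G.W e d :=
  ⟨g, (MvPolynomial.mem_restrictTotalDegree _ _ _).2 hg, rfl⟩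

lemma W_le (hn : 2 ≤ n) (he : e + 1 ≤ n) (d : ℕ) : G.W e d ≤ Submodule.span K
    (Set.range fun μ : box n e d =>
      MvPolynomial.aeval (G.z e) (MvPolynomial.monomial μ.1 (1 : K))) := by
  rintro _ ⟨g, hg, rfl⟩
  have hg' : g.totalDegree ≤ d := (MvPolynomial.mem_restrictTotalDegree _ _ _).1 hg
  obtain ⟨s, hs, t, ht, rfl⟩ := Submodule.mem_sup.1 (std_reduce hn he _ g hg')
  have ht' : t ∈ relIdeal K n e := ht
  have h1 := relIdeal_aeval (G.z e) (G.z_inj he) (G.z_root he) ht'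
  rw [AlgHom.toLinearMap_apply, map_add, h1, add_zero]
  rw [MvPolynomial.restrictSupport_eq_span] at hs
  refine Submodule.span_induction (p := fun s _ => MvPolynomial.aeval (G.z e) s ∈ _) ?_ ?_ ?_ ?_ hs
  · rintro _ ⟨μ, hμ, rfl⟩
    refine Submodule.subset_span ?_
    refine ⟨⟨μ, ?_⟩, rfl⟩
    rw [mem_box]
    refine ⟨?_, fun l hl => hμ.2 l hl hl⟩
    exact (Finsupp.le_degree 0 μ).trans hμ.1
  · simp
  · intro a b _ _ ha hb
    rw [map_add]; exact add_mem ha hb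
  · intro a b _ hb
    rw [map_smul]; exact Submodule.smul_mem _ _ hb

lemma W_finite (hn : 2 ≤ n) (he : e + 1 ≤ n) (d : ℕ) : Module.Finite K (G.W e d) :=
  have := FiniteDimensional.span_of_finite K (Set.finite_range fun μ : box n e d =>
      MvPolynomial.aeval (G.z e) (MvPolynomial.monomial μ.1 (1 : K)))
  Submodule.finiteDimensional_of_le (G.W_le hn he d)

lemma finrank_W (hn : 2 ≤ n) (he : e + 1 ≤ n) (d : ℕ) :
    Module.finrank K (G.W e d) ≤ rk n e * (d + 1) := by
  have := FiniteDimensional.span_of_finite K (Set.finite_range fun μ : box n e d =>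
      MvPolynomial.aeval (G.z e) (MvPolynomial.monomial μ.1 (1 : K)))
  refine (Submodule.finrank_mono (G.W_le hn he d)).trans ?_
  refine (finrank_range_le_card _).trans ?_
  rw [← card_box, Fintype.card_coe]

/-- The polynomial supported on `B` with given coefficients. -/
noncomputable def comb {e : ℕ} (B : Finset (Fin (e + 1) →₀ ℕ)) :
    (B → K) →ₗ[K] MvPolynomial (Fin (e + 1)) K :=
  Fintype.linearCombination K (fun μ : B => MvPolynomial.monomial μ.1 (1 : K))

lemma comb_apply (B : Finset (Fin (e + 1) →₀ ℕ)) (c : B → K) :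
    comb B c = ∑ μ : B, MvPolynomial.monomial μ.1 (c μ) := by
  simp [comb, Fintype.linearCombination_apply, MvPolynomial.smul_monomial]

lemma coeff_comb (B : Finset (Fin (e + 1) →₀ ℕ)) (c : B → K) (μ : B) :
    (comb B c).coeff μ.1 = c μ := by
  rw [comb_apply, MvPolynomial.coeff_sum, Finset.sum_eq_single μ]
  · simp
  · intro ν _ h
    rw [MvPolynomial.coeff_monomial, if_neg]
    exact fun h' => h (Subtype.ext h')
  · simp

lemma comb_support (B : Finset (Fin (e + 1) →₀ ℕ)) (c : B → K) :
    (comb B c).support ⊆ B := by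
  intro μ hμ
  rw [comb_apply] at hμ
  have := MvPolynomial.support_sum hμ
  simp only [Finset.mem_biUnion] at this
  obtain ⟨ν, -, h⟩ := this
  have := MvPolynomial.support_monomial_subset h
  rw [Finset.mem_singleton] at this
  rw [this]; exact ν.2

lemma comb_totalDegree (he : e + 1 ≤ n) (a : ℕ) (c : box n e a → K) :
    (comb (box n e a) c).totalDegree ≤ a + (n - 1) * (n - 2) / 2 := by
  refine Finset.sup_le fun μ hμ => ?_
  have := box_degree he (comb_support _ _ hμ)
  rwa [Finsupp.degree_eq_sum, ← Finsupp.sum_fintype μ (fun _ a => a) (by simp)] at this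

lemma comb_eq_zero (he : e + 1 ≤ n) (a : ℕ) (c : box n e a → K)
    (h : MvPolynomial.aeval (G.z e) (comb (box n e a) c) = 0) : c = 0 := by
  have h1 := G.indep he _ (fun μ hμ => (mem_box.1 (comb_support _ _ hμ)).2) h
  funext μ
  rw [← coeff_comb _ c μ, h1]; simp

/-- A bound for the number of zeros of a function `g` of degree at most `d` on the curve, in the form:
if no nonzero univariate polynomial of degree `< k` becomes a multiple of `g` after substituting
`x_0`, then `k` is at most about `rk · d`. The functions `g B - h(x_0)`, with `B` standard and
`deg h < k`, then form a space of dimension `rk (k + 1) + k` inside `W`. -/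
lemma zero_lemma (hn : 2 ≤ n) (he : e + 1 ≤ n) (d k : ℕ) (g : MvPolynomial (Fin (e + 1)) K)
    (hg : g.totalDegree ≤ d) (hgy : MvPolynomial.aeval (G.z e) g ≠ 0)
    (hh : ∀ (h : K[X]) (s : MvPolynomial (Fin (e + 1)) K), h.degree < k →
      aeval (G.z e 0) h = MvPolynomial.aeval (G.z e) (g * s) → h = 0) :
    k ≤ rk n e * (d + (n - 1) * (n - 2) / 2) := by
  set δ := (n - 1) * (n - 2) / 2
  -- `T (c, h) = g B_c - h(x₀)`, where `B_c` has coefficients `c`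
  let ev := (MvPolynomial.aeval (R := K) (G.z e)).toLinearMap
  let T1 : (box n e k → K) →ₗ[K] PowerSeries K :=
    ev ∘ₗ LinearMap.mulLeft K g ∘ₗ comb (box n e k)
  let T2 : degreeLT K k →ₗ[K] PowerSeries K :=
    (aeval (R := K) (G.z e 0)).toLinearMap ∘ₗ (degreeLT K k).subtype
  let T : (box n e k → K) × degreeLT K k →ₗ[K] PowerSeries K := T1.coprod (-T2)
  have hT : ∀ x, T x ∈ G.W e (k + δ + d) := by
    rintro ⟨c, h⟩
    simp only [T, LinearMap.coprod_apply, LinearMap.neg_apply]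
    refine add_mem ?_ (neg_mem ?_)
    · refine G.aeval_mem_W ?_
      refine (MvPolynomial.totalDegree_mul _ _).trans ?_
      have := comb_totalDegree he k c
      omega
    · have : T2 h = MvPolynomial.aeval (G.z e) (aeval (MvPolynomial.X (0 : Fin (e + 1)) : MvPolynomial (Fin (e + 1)) K) h.1) := by
        rw [← aeval_algHom_apply]; simp [T2]
      rw [this]
      refine G.aeval_mem_W ?_
      rw [aeval_eq_sum_range]
      refine (MvPolynomial.totalDegree_finsetSum _ _).trans (Finset.sup_le fun i hi => ?_)
      refine (MvPolynomial.totalDegree_smul_le _ _).trans ?_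
      refine (MvPolynomial.totalDegree_pow _ _).trans ?_
      rw [MvPolynomial.totalDegree_X, mul_one]
      rw [Finset.mem_range] at hi
      by_cases h0 : h.1 = 0
      · rw [h0, natDegree_zero] at hi; omega
      · have := (natDegree_lt_iff_degree_lt h0).2 (mem_degreeLT.1 h.2)
        omega
  have hinj : Function.Injective T := by
    rw [← LinearMap.ker_eq_bot, LinearMap.ker_eq_bot']
    rintro ⟨c, h⟩ h0
    simp only [T, LinearMap.coprod_apply, LinearMap.neg_apply, add_neg_eq_zero] at h0
    have h1 : h.1 = 0 := hh h.1 (comb _ c) (mem_degreeLT.1 h.2) h0.symm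
    have h2 : T2 h = 0 := by simp [T2, h1]
    rw [h2] at h0
    have h3 : MvPolynomial.aeval (G.z e) g *
      MvPolynomial.aeval (G.z e) (comb (box n e k) c) = 0 := by
      rw [← map_mul]; exact h0
    have h4 := G.comb_eq_zero he k c ((mul_eq_zero.1 h3).resolve_left hgy)
    rw [h4]
    exact Prod.ext rfl (Subtype.ext h1)
  have := G.W_finite hn he (k + δ + d)
  have hfr := LinearMap.finrank_le_finrank_of_injective (f := T.codRestrict _ hT)
    (fun a b hab => hinj (congrArg Subtype.val hab))
  have hdl : Module.finrank K (degreeLT K k) = k := by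
    rw [(degreeLTEquiv K k).finrank_eq]; simp
  have hfin : Module.Finite K (degreeLT K k) := Module.Finite.equiv (degreeLTEquiv K k).symm
  rw [Module.finrank_prod, Module.finrank_fintype_fun_eq_card, Fintype.card_coe, card_box,
    hdl] at hfr
  have h5 := hfr.trans (G.finrank_W hn he _)
  have : rk n e * (k + δ + d + 1) = rk n e * (k + 1) + rk n e * (d + δ) := by ring
  omega

end GenPt
end

/-! ### Orders of vanishing and multiplicities -/
section
variable {K : Type*} [Field K] {n e : ℕ}

lemma aeval_C_add_X_eq (c : K) (h : K[X]) :
    aeval (PowerSeries.C c + PowerSeries.X : PowerSeries K) h =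
      ((h.comp (C c + X) : K[X]) : PowerSeries K) := by
  have : (PowerSeries.C c + PowerSeries.X : PowerSeries K) =
      Polynomial.coeToPowerSeries.algHom (A := K) (C c + X) := by
    simp [Polynomial.coeToPowerSeries.algHom_apply]
  rw [this, aeval_algHom_apply, Polynomial.coeToPowerSeries.algHom_apply]
  simp [comp, aeval_def, algebraMap_eq]

/-- A function of degree at most `d` that does not vanish identically on the curve vanishes at `X = 0`
to order at most about `rk · d`. -/
lemma GenPt.order_lemma (G : GenPt K n) (hn : 2 ≤ n) (he : e + 1 ≤ n) (d k : ℕ)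
    (g : MvPolynomial (Fin (e + 1)) K)
    (hg : g.totalDegree ≤ d) (hgy : MvPolynomial.aeval (G.z e) g ≠ 0)
    (hk : PowerSeries.X ^ k ∣ MvPolynomial.aeval (G.z e) g) :
    k ≤ rk n e * (d + (n - 1) * (n - 2) / 2) := by
  refine G.zero_lemma hn he d k g hg hgy fun h s hd hs => ?_
  rw [show G.z e 0 = _ from G.y_zero, map_mul] at hs
  have h1 : PowerSeries.X ^ k ∣ ((h.comp (C G.c + X) : K[X]) : PowerSeries K) := by
    rw [← aeval_C_add_X_eq, hs]; exact hk.mul_right _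
  rw [PowerSeries.X_pow_dvd_iff] at h1
  by_contra h0
  apply h0
  have h2 : h.comp (C G.c + X) = 0 := by
    ext m
    rw [coeff_zero]
    by_cases hm : m < k
    · simpa using h1 m hm
    · refine coeff_eq_zero_of_natDegree_lt ?_
      rw [natDegree_comp, add_comm, natDegree_X_add_C, mul_one]
      have := (natDegree_lt_iff_degree_lt h0).2 hd
      omega
  apply aeval_C_add_X_eq_zero G.c
  rw [aeval_C_add_X_eq, h2]; simp

/-- If nonzero elements of `V` vanish to order `< p`, then `V` is linearly disjoint from `p`-th powers:
`∑ v_l b_l ^ p = 0` with `v_l ∈ V` and `b_l` independent over `K` forces `v_l = 0`. Eliminating with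
a `b_{l₀}` of minimal order `k` leaves one term `v₀ b_{l₀} ^ p` of order `< kp + p` unless `v₀ = 0`,
while all others are divisible by `X ^ ((k + 1) p)`. -/
lemma frob_indep (p : ℕ) [Fact p.Prime] [CharP K p] (V : Submodule K (PowerSeries K))
    (hV : ∀ x ∈ V, x ≠ 0 → ¬ PowerSeries.X ^ p ∣ x) {ι : Type*} [DecidableEq ι] (m : ℕ) :
    ∀ (s : Finset ι) (_ : s.card = m) (b v : ι → PowerSeries K)
    (_ : ∀ a : ι → K, ∑ l ∈ s, a l • b l = 0 → ∀ l ∈ s, a l = 0) (_ : ∀ l, v l ∈ V)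
    (_ : ∑ l ∈ s, v l * b l ^ p = 0), ∀ l ∈ s, v l = 0 := by
  have hpp : p.Prime := Fact.out
  have : CharP (PowerSeries K) p :=
    charP_of_injective_algebraMap (algebraMap K (PowerSeries K)).injective p
  induction m with
  | zero =>
    intro s hs b v _ _ _ l hl
    rw [Finset.card_eq_zero] at hs
    simp [hs] at hl
  | succ m ih =>
    intro s hs b v hb hv hsum
    have hne : s.Nonempty := Finset.card_pos.1 (by omega)
    obtain ⟨l0, hl0, hmin⟩ := Finset.exists_min_image s (fun l => (b l).order) hne
    have hb0 : b l0 ≠ 0 := by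
      intro h
      have := hb (Pi.single l0 1) (Finset.sum_eq_zero fun l _ => by
        by_cases hl : l = l0
        · subst hl; simp [h]
        · simp [hl]) l0 hl0
      simp at this
    set k := (b l0).order.toNat with hk
    have hko : (b l0).order = k := (ENat.natCast_toNat (by simpa [PowerSeries.order_eq_top] using hb0)).symm
    have hc0 : PowerSeries.coeff k (b l0) ≠ 0 := PowerSeries.coeff_order hb0
    obtain ⟨u, hu⟩ : PowerSeries.X ^ k ∣ b l0 :=
      PowerSeries.X_pow_dvd_iff.2 fun i hi => PowerSeries.coeff_of_lt_order i (by
        rw [hko]; exact_mod_cast hi)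
    have hu0 : PowerSeries.constantCoeff u ≠ 0 := by
      rw [hu, PowerSeries.coeff_X_pow_mul', if_pos le_rfl, Nat.sub_self] at hc0
      simpa using hc0
    -- subtracting multiples of `b l0` makes every other order exceed `k`
    let c : ι → K := fun l => PowerSeries.coeff k (b l) / PowerSeries.coeff k (b l0)
    have hcl0 : c l0 = 1 := div_self hc0
    let b' : ι → PowerSeries K := fun l => b l - c l • b l0
    let v0 : PowerSeries K := ∑ l ∈ s, (c l) ^ p • v l
    have hv0V : v0 ∈ V := sum_mem fun l _ => V.smul_mem _ (hv l)
    have hb'dvd : ∀ l ∈ s, PowerSeries.X ^ (k + 1) ∣ b' l := by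
      intro l hl
      rw [PowerSeries.X_pow_dvd_iff]
      intro i hi
      simp only [b', map_sub, map_smul, smul_eq_mul]
      rcases Nat.lt_succ_iff_lt_or_eq.1 hi with h | h
      · rw [PowerSeries.coeff_of_lt_order i (lt_of_lt_of_le (by rw [hko]; exact_mod_cast h)
          (hmin l hl)), PowerSeries.coeff_of_lt_order i (by rw [hko]; exact_mod_cast h)]
        simp
      · subst h
        simp only [c]
        field_simp
        simp
    have hexp : ∀ l, v l * b l ^ p = v l * b' l ^ p + ((c l) ^ p • v l) * b l0 ^ p := by
      intro l
      have : b l = b' l + c l • b l0 := by simp [b']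
      rw [this, add_pow_char, _root_.smul_pow]
      rw [mul_add, mul_smul_comm, smul_mul_assoc]
    have hsum2 : ∑ l ∈ s.erase l0, v l * b' l ^ p + v0 * b l0 ^ p = 0 := by
      rw [Finset.sum_congr rfl (fun l _ => hexp l), Finset.sum_add_distrib, ← Finset.sum_mul] at hsum
      rw [← hsum]
      congr 1
      refine Finset.sum_erase _ ?_
      simp [b', hcl0, hpp.ne_zero]
    have hv0 : v0 = 0 := by
      by_contra hne0
      apply hV v0 hv0V hne0
      have h1 : PowerSeries.X ^ ((k + 1) * p) ∣ v0 * b l0 ^ p := by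
        rw [eq_neg_of_add_eq_zero_right hsum2, dvd_neg]
        refine Finset.dvd_sum fun l hl => Dvd.dvd.mul_left ?_ _
        rw [pow_mul]
        exact pow_dvd_pow_of_dvd (hb'dvd l (Finset.mem_of_mem_erase hl)) p
      rw [hu, mul_pow, ← pow_mul, add_mul, one_mul, pow_add,
        show v0 * (PowerSeries.X ^ (k * p) * u ^ p) = PowerSeries.X ^ (k * p) * (v0 * u ^ p) by ring]
        at h1
      have h2 := (mul_dvd_mul_iff_left (pow_ne_zero _ PowerSeries.X_ne_zero)).1 h1
      have hunit : IsUnit (u ^ p) := (PowerSeries.isUnit_iff_constantCoeff.2 hu0.isUnit).pow p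
      exact (hunit.dvd_mul_right).1 h2
    rw [hv0, zero_mul, add_zero] at hsum2
    have h3 := ih (s.erase l0) (by rw [Finset.card_erase_of_mem hl0]; omega) b' v ?_ hv hsum2
    · intro l hl
      by_cases hll : l = l0
      · subst hll
        have : v0 = v l := by
          simp only [v0]
          rw [Finset.sum_eq_single l]
          · simp [hcl0]
          · intro i hi hne'
            rw [h3 i (Finset.mem_erase.2 ⟨hne', hi⟩), smul_zero]
          · exact fun h => absurd hl h
        rw [← this, hv0]
      · exact h3 l (Finset.mem_erase.2 ⟨hll, hl⟩)
    · intro a ha l hl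
      let a' : ι → K := fun i => if i = l0 then - ∑ j ∈ s.erase l0, a j * c j else a i
      have h4 := hb a' ?_ l (Finset.mem_of_mem_erase hl)
      · simpa [a', Finset.ne_of_mem_erase hl] using h4
      · rw [← Finset.add_sum_erase s _ hl0, Finset.sum_congr rfl (g := fun i => a i • b i)
          (fun i hi => by simp [a', Finset.ne_of_mem_erase hi])]
        simp only [b', smul_sub, Finset.sum_sub_distrib] at ha
        rw [sub_eq_zero] at ha
        rw [ha]
        simp only [a', if_true, neg_smul, Finset.sum_smul, mul_smul]
        simp

/-- The derivation `∏_l (n x_l ^ (n - 1) - 1) · d/dt`, where `t = x_k ^ n - x_k` is the common value on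
the curve. Clearing denominators makes it polynomial:
`D x_k = ∏_{l ≠ k} (n x_l ^ (n - 1) - 1)`. -/
noncomputable def D (K : Type*) [Field K] (n e : ℕ) :
    Derivation K (MvPolynomial (Fin (e + 1)) K) (MvPolynomial (Fin (e + 1)) K) :=
  MvPolynomial.mkDerivation K fun k =>
    ∏ l ∈ Finset.univ.erase k, ((n : MvPolynomial (Fin (e + 1)) K) * MvPolynomial.X l ^ (n - 1) - 1)

lemma D_X (k : Fin (e + 1)) : D K n e (MvPolynomial.X k) = ∏ l ∈ Finset.univ.erase k,
    ((n : MvPolynomial (Fin (e + 1)) K) * MvPolynomial.X l ^ (n - 1) - 1) :=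
  MvPolynomial.mkDerivation_X _ _ _

lemma D_X_totalDegree (k : Fin (e + 1)) :
    (D K n e (MvPolynomial.X k)).totalDegree ≤ e * (n - 1) := by
  rw [D_X]
  refine (MvPolynomial.totalDegree_finsetProd _ _).trans ?_
  refine (Finset.sum_le_card_nsmul _ _ (n - 1) fun l _ => ?_).trans ?_
  · refine (MvPolynomial.totalDegree_sub _ _).trans (max_le ?_ (by simp))
    refine (MvPolynomial.totalDegree_mul _ _).trans ?_
    have : ((n : MvPolynomial (Fin (e + 1)) K)).totalDegree = 0 := by
      rw [← map_natCast (MvPolynomial.C (R := K) (σ := Fin (e + 1)))]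
      exact MvPolynomial.totalDegree_C _
    have h2 := MvPolynomial.totalDegree_pow (MvPolynomial.X l : MvPolynomial (Fin (e + 1)) K) (n - 1)
    rw [MvPolynomial.totalDegree_X, mul_one] at h2
    omega
  · simp

lemma D_totalDegree (g : MvPolynomial (Fin (e + 1)) K) :
    (D K n e g).totalDegree ≤ g.totalDegree + e * (n - 1) := by
  conv_lhs => rw [g.as_sum]
  rw [map_sum]
  refine (MvPolynomial.totalDegree_finsetSum _ _).trans (Finset.sup_le fun μ hμ => ?_)
  rw [D, MvPolynomial.mkDerivation_monomial]
  refine (MvPolynomial.totalDegree_smul_le _ _).trans ?_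
  refine (MvPolynomial.totalDegree_finsetSum _ _).trans (Finset.sup_le fun k hk => ?_)
  simp only [smul_eq_mul]
  refine (MvPolynomial.totalDegree_mul _ _).trans ?_
  refine add_le_add ?_ ?_
  · refine (MvPolynomial.totalDegree_monomial_le _ _).trans ?_
    refine le_trans ?_ (MvPolynomial.le_totalDegree hμ)
    rw [Finsupp.sum_fintype _ _ (by simp), Finsupp.sum_fintype _ _ (by simp)]
    exact Finset.sum_le_sum fun i _ => by simp
  · rw [← D_X]; exact D_X_totalDegree k

lemma D_iter_totalDegree (m : ℕ) (g : MvPolynomial (Fin (e + 1)) K) :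
    ((D K n e)^[m] g).totalDegree ≤ g.totalDegree + m * (e * (n - 1)) := by
  induction m with
  | zero => simp
  | succ m ih =>
    rw [Function.iterate_succ_apply']
    refine (D_totalDegree _).trans ?_
    rw [add_mul, one_mul]; omega

/-- At the generic point `D` is proportional to `d/dX`. -/
lemma GenPt.deriv_ev (G : GenPt K n) (he : e + 1 ≤ n)
    (g : MvPolynomial (Fin (e + 1)) K) :
    (∏ l, ((n : PowerSeries K) * G.z e l ^ (n - 1) - 1)) *
        PowerSeries.derivative (R := K) (MvPolynomial.aeval (G.z e) g) =
      ((n : PowerSeries K) * G.z e 0 ^ (n - 1) - 1) * MvPolynomial.aeval (G.z e) (D K n e g) := by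
  have hX : ∀ k, ((n : PowerSeries K) * G.z e k ^ (n - 1) - 1) *
      PowerSeries.derivative (R := K) (G.z e k) = ((n : PowerSeries K) * G.z e 0 ^ (n - 1) - 1) := by
    have hd : ∀ k, PowerSeries.derivative (R := K) (G.z e k ^ n - G.z e k) =
        ((n : PowerSeries K) * G.z e k ^ (n - 1) - 1) *
          PowerSeries.derivative (R := K) (G.z e k) := by
      intro k
      rw [map_sub, Derivation.leibniz_pow]
      simp only [nsmul_eq_mul, smul_eq_mul]
      ring
    intro k
    rw [← hd, G.z_root he k, hd, show G.z e 0 = _ from G.y_zero]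
    simp
  induction g using MvPolynomial.induction_on with
  | C a =>
    rw [MvPolynomial.aeval_C, ← MvPolynomial.algebraMap_eq, Derivation.map_algebraMap,
      Derivation.map_algebraMap, map_zero, mul_zero, mul_zero]
  | add a b ha hb => simp only [map_add, mul_add, ha, hb]
  | mul_X a k ha =>
    simp only [map_mul, Derivation.leibniz, smul_eq_mul, map_add, MvPolynomial.aeval_X, mul_add]
    have h2 : (∏ l, ((n : PowerSeries K) * G.z e l ^ (n - 1) - 1)) *
        PowerSeries.derivative (R := K) (G.z e k) = ((n : PowerSeries K) * G.z e 0 ^ (n - 1) - 1) *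
        MvPolynomial.aeval (G.z e) (D K n e (MvPolynomial.X k)) := by
      rw [D_X, ← Finset.mul_prod_erase _ _ (Finset.mem_univ k), mul_right_comm, hX]
      simp
    linear_combination G.z e k * ha + MvPolynomial.aeval (G.z e) a * h2

lemma GenPt.ker_D (G : GenPt K n) (hn : 2 ≤ n) (he : e + 1 ≤ n)
    (g : MvPolynomial (Fin (e + 1)) K) (hg : MvPolynomial.aeval (G.z e) g = 0) :
    MvPolynomial.aeval (G.z e) (D K n e g) = 0 := by
  have h := G.deriv_ev he g
  rw [hg, map_zero, mul_zero] at h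
  refine (mul_eq_zero.1 h.symm).resolve_left fun h0 => ?_
  have h1 := aeval_C_add_X_eq_zero G.c ((n : K[X]) * X ^ (n - 1) - 1) (by
    rw [show G.z e 0 = _ from G.y_zero] at h0
    simpa using h0)
  have := congrArg (fun q => Polynomial.eval 0 q) h1
  simp [show n - 1 ≠ 0 by omega] at this

/-- Vanishing to order at least `m` at `P`: the polynomials `g, D g, …, D ^ (m - 1) g` vanish at `P`. -/
def Van (n e : ℕ) (P : Fin (e + 1) → K) : ℕ → MvPolynomial (Fin (e + 1)) K → Prop
  | 0, _ => True
  | m + 1, g => MvPolynomial.aeval P g = 0 ∧ Van n e P m (D K n e g)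

variable {P : Fin (e + 1) → K}

lemma Van.mono {m : ℕ} : ∀ {g : MvPolynomial (Fin (e + 1)) K}, Van n e P (m + 1) g →
    Van n e P m g := by
  induction m with
  | zero => intro g _; trivial
  | succ m ih => intro g h; exact ⟨h.1, ih h.2⟩

lemma Van.add {m : ℕ} : ∀ {g h : MvPolynomial (Fin (e + 1)) K}, Van n e P m g →
    Van n e P m h → Van n e P m (g + h) := by
  induction m with
  | zero => intros; trivial
  | succ m ih =>
    intro g h hg hh
    refine ⟨by rw [map_add, hg.1, hh.1, add_zero], ?_⟩
    rw [map_add]; exact ih hg.2 hh.2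

lemma Van.neg {m : ℕ} : ∀ {g : MvPolynomial (Fin (e + 1)) K}, Van n e P m g →
    Van n e P m (-g) := by
  induction m with
  | zero => intros; trivial
  | succ m ih =>
    intro g hg
    refine ⟨by rw [map_neg, hg.1, neg_zero], ?_⟩
    rw [map_neg]; exact ih hg.2

lemma Van.mul {m : ℕ} : ∀ {g s : MvPolynomial (Fin (e + 1)) K}, Van n e P m g →
    Van n e P m (g * s) := by
  induction m with
  | zero => intros; trivial
  | succ m ih =>
    intro g s hg
    refine ⟨by rw [map_mul, hg.1, zero_mul], ?_⟩
    rw [Derivation.leibniz, smul_eq_mul, smul_eq_mul, mul_comm s]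
    exact (ih hg.mono).add (ih hg.2)

lemma Van.cancel {m : ℕ} {u : MvPolynomial (Fin (e + 1)) K} (hu : MvPolynomial.aeval P u ≠ 0) :
    ∀ {g : MvPolynomial (Fin (e + 1)) K}, Van n e P m (g * u) → Van n e P m g := by
  induction m with
  | zero => intros; trivial
  | succ m ih =>
    intro g hg
    have h1 := hg.1
    rw [map_mul] at h1
    refine ⟨(mul_eq_zero.1 h1).resolve_right hu, ih ?_⟩
    have h2 : Van n e P m g := ih hg.mono
    have h3 := hg.2.add (h2.mul (s := D K n e u)).neg
    rw [Derivation.leibniz, smul_eq_mul, smul_eq_mul] at h3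
    convert h3 using 1
    ring

/-- Functions that are zero on the curve vanish to every order at its points, since `D` is tangent to
the curve. -/
lemma Van.of_ker (G : GenPt K n) (hn : 2 ≤ n) (he : e + 1 ≤ n) (hP : Function.Injective P)
    (hf : ∀ k, P k ^ n - P k = P 0 ^ n - P 0) {m : ℕ} :
    ∀ {g : MvPolynomial (Fin (e + 1)) K}, MvPolynomial.aeval (G.z e) g = 0 → Van n e P m g := by
  induction m with
  | zero => intros; trivial
  | succ m ih =>
    intro g hg
    exact ⟨relIdeal_aeval P hP hf (G.mem_relIdeal hn he g hg), ih (G.ker_D hn he g hg)⟩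

/-- For a function of `x_0` alone and `m ≤ p`, vanishing to order `m` at an unramified point is
ordinary vanishing to order `m` at `P 0`. -/
lemma Van.dvd (p : ℕ) [Fact p.Prime] [CharP K p] (hf' : ∀ l, (n : K) * P l ^ (n - 1) - 1 ≠ 0)
    {m : ℕ} (hm : m ≤ p) : ∀ {h : K[X]},
    Van n e P m (aeval (MvPolynomial.X (0 : Fin (e + 1)) : MvPolynomial (Fin (e + 1)) K) h) →
    (X - C (P 0)) ^ m ∣ h := by
  induction m with
  | zero => intros; simp
  | succ m ih =>
    intro h hh
    have h0 : h.IsRoot (P 0) := by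
      have := hh.1
      rw [← aeval_algHom_apply, MvPolynomial.aeval_X] at this
      simpa using this
    have h1 : (X - C (P 0)) ^ m ∣ derivative h := by
      refine ih (by omega) (Van.cancel (u := D K n e (MvPolynomial.X 0)) ?_ ?_)
      · rw [D_X, map_prod, Finset.prod_ne_zero_iff]
        intro l _
        simpa using hf' l
      · have h2 := hh.2
        have h3 : D K n e (aeval (MvPolynomial.X (0 : Fin (e + 1))) h) =
            aeval (MvPolynomial.X (0 : Fin (e + 1))) (derivative h) * D K n e (MvPolynomial.X 0) := by
          rw [← smul_eq_mul]
          exact Derivation.map_aeval _ _ _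
        rwa [h3] at h2
    by_cases hne : h = 0
    · simp [hne]
    by_contra hnd
    obtain ⟨u, hu, hnu⟩ := exists_eq_pow_rootMultiplicity_mul_and_not_dvd h hne (P 0)
    set k := h.rootMultiplicity (P 0) with hk
    have hk1 : 1 ≤ k := (rootMultiplicity_pos hne).2 h0
    have hkm : k ≤ m := by
      by_contra hcon
      exact hnd ((pow_dvd_pow _ (by omega)).trans (Dvd.intro _ hu.symm))
    obtain ⟨k', hk'⟩ : ∃ k', k = k' + 1 := ⟨k - 1, by omega⟩
    rw [hk'] at hu
    have hder : derivative h = (X - C (P 0)) ^ k' *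
        (C ((k' + 1 : ℕ) : K) * u + (X - C (P 0)) * derivative u) := by
      rw [hu, derivative_mul, derivative_pow]
      simp
      ring
    have h2 : (X - C (P 0)) ^ (k' + 1) ∣ derivative h := (pow_dvd_pow _ (by omega)).trans h1
    rw [hder, pow_succ, mul_dvd_mul_iff_left (pow_ne_zero _ (X_sub_C_ne_zero _)),
      dvd_add_left (dvd_mul_right _ _)] at h2
    have hcast : ((k' + 1 : ℕ) : K) ≠ 0 := by
      rw [Ne, CharP.cast_eq_zero_iff K p]
      exact Nat.not_dvd_of_pos_of_lt (by omega) (by omega)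
    exact hnu (((isUnit_C.2 hcast.isUnit).dvd_mul_left).1 h2)

/-- The number of unramified zeros, with common multiplicity `M ≤ p`, of a function of degree at most
`d` that is nonzero on the curve. -/
lemma GenPt.zeros (G : GenPt K n) (p : ℕ) [Fact p.Prime] [CharP K p] (hn : 2 ≤ n)
    (he : e + 1 ≤ n) (d M : ℕ) (hM : M ≤ p) (g : MvPolynomial (Fin (e + 1)) K)
    (hg : g.totalDegree ≤ d) (hgy : MvPolynomial.aeval (G.z e) g ≠ 0)
    (pts : Finset (Fin (e + 1) → K)) (hpts : ∀ P ∈ pts, ∀ Q ∈ pts, P 0 = Q 0 → P = Q)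
    (hinj : ∀ P ∈ pts, Function.Injective P)
    (hf : ∀ P ∈ pts, ∀ k, P k ^ n - P k = P 0 ^ n - P 0)
    (hf' : ∀ P ∈ pts, ∀ l, (n : K) * P l ^ (n - 1) - 1 ≠ 0)
    (hvan : ∀ P ∈ pts, Van n e P M g) :
    pts.card * M ≤ rk n e * (d + (n - 1) * (n - 2) / 2) := by
  refine G.zero_lemma hn he d _ g hg hgy fun h s hd hs => ?_
  by_contra hne
  have hdvd : ∀ P ∈ pts, (X - C (P 0)) ^ M ∣ h := by
    intro P hP
    refine Van.dvd p (hf' P hP) hM ?_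
    have h1 : MvPolynomial.aeval (G.z e)
        (aeval (MvPolynomial.X (0 : Fin (e + 1)) : MvPolynomial (Fin (e + 1)) K) h - g * s) = 0 := by
      rw [map_sub, ← hs, ← aeval_algHom_apply, MvPolynomial.aeval_X, sub_self]
    have h2 := Van.of_ker G hn he (hinj P hP) (hf P hP) (m := M) h1
    have h3 := h2.add ((hvan P hP).mul (s := s))
    rwa [sub_add_cancel] at h3
  have hprod : ∏ P ∈ pts, (X - C (P 0)) ^ M ∣ h := by
    refine Finset.prod_dvd_of_coprime ?_ hdvd
    intro P hP Q hQ hne'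
    refine IsCoprime.pow ?_
    refine isCoprime_X_sub_C_of_isUnit_sub ?_
    rw [isUnit_iff_ne_zero, sub_ne_zero]
    exact fun h => hne' (hpts P hP Q hQ h)
  have hdeg := natDegree_le_of_dvd hprod hne
  rw [natDegree_prod _ _ (fun P _ => pow_ne_zero _ (X_sub_C_ne_zero _))] at hdeg
  simp only [natDegree_pow, natDegree_X_sub_C, mul_one, Finset.sum_const, smul_eq_mul] at hdeg
  have := (natDegree_lt_iff_degree_lt hne).2 hd
  omega

end

/-! ### The Stepanov bound -/
section
variable {K : Type*} [Field K] {n e : ℕ}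

lemma Van.of_forall {P : Fin (e + 1) → K} {m : ℕ} : ∀ {g : MvPolynomial (Fin (e + 1)) K},
    (∀ j < m, MvPolynomial.aeval P ((D K n e)^[j] g) = 0) → Van n e P m g := by
  induction m with
  | zero => intros; trivial
  | succ m ih =>
    intro g h
    refine ⟨h 0 (by omega), ih fun j hj => ?_⟩
    have := h (j + 1) (by omega)
    rwa [Function.iterate_succ_apply] at this

lemma D_pow_char (p : ℕ) [CharP K p] (g : MvPolynomial (Fin (e + 1)) K) :
    D K n e (g ^ p) = 0 := by
  rw [Derivation.leibniz_pow, ← Nat.cast_smul_eq_nsmul K, CharP.cast_eq_zero, zero_smul]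

/-- In characteristic `p` the `p`-th powers are constants for `D`. -/
lemma D_iter_sum {ι : Type*} [Fintype ι] (p : ℕ) [CharP K p] (c : ι → K)
    (u v : ι → MvPolynomial (Fin (e + 1)) K) (m : ℕ) :
    (D K n e)^[m] (∑ x, c x • (u x * v x ^ p)) = ∑ x, c x • ((D K n e)^[m] (u x) * v x ^ p) := by
  induction m with
  | zero => simp
  | succ m ih =>
    rw [Function.iterate_succ_apply', ih, map_sum]
    refine Finset.sum_congr rfl fun x _ => ?_
    rw [Derivation.map_smul, Derivation.leibniz, D_pow_char, smul_zero, zero_add, smul_eq_mul, mul_comm,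
      Function.iterate_succ_apply']

lemma monomial_totalDegree (he : e + 1 ≤ n) {a : ℕ} (x : box n e a) :
    (MvPolynomial.monomial x.1 (1 : K)).totalDegree ≤ a + (n - 1) * (n - 2) / 2 := by
  refine (MvPolynomial.totalDegree_monomial_le _ _).trans ?_
  have := box_degree he x.2
  rwa [Finsupp.degree_eq_sum, ← Finsupp.sum_fintype x.1 (fun _ a => a) (by simp)] at this

/-- The auxiliary function `F = ∑ c u v ^ p` with `u`, `v` standard monomials. At a point with
`P_k ^ p = P_{k+1}` the value of `D ^ m F` is that of `∑ c (D ^ m u) (shift v)`, which has small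
degree, so requiring it to vanish on the curve for all `m < M` is a linear system in the `c` with
fewer equations than unknowns (`hcount`). The bound `hO` makes `frob_indep` applicable, so that a
nontrivial solution gives a nonzero `F`. -/
lemma GenPt.stepanov_aux (G : GenPt K n) (p : ℕ) [Fact p.Prime] [CharP K p] (hn : 2 ≤ n)
    (he : e + 1 ≤ n) (a b M : ℕ)
    (hO : rk n e * (a + (n - 1) * (n - 2) / 2 + (n - 1) * (n - 2) / 2) < p)
    (hcount : ∑ m ∈ Finset.range M, rk n e * (a + (n - 1) * (n - 2) / 2 +
      (b + (n - 1) * (n - 2) / 2) + m * (e * (n - 1)) + 1) < rk n e * (a + 1) * (rk n e * (b + 1))) :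
    ∃ F : MvPolynomial (Fin (e + 1)) K,
      F.totalDegree ≤ a + (n - 1) * (n - 2) / 2 + p * (b + (n - 1) * (n - 2) / 2) ∧
      MvPolynomial.aeval (G.z e) F ≠ 0 ∧
      ∀ P : Fin (e + 1) → K, Function.Injective P → (∀ k, P k ^ n - P k = P 0 ^ n - P 0) →
        (∀ k, P k ^ p = P (k + 1)) → Van n e P M F := by
  classical
  have hpp : p.Prime := Fact.out
  set δ := (n - 1) * (n - 2) / 2
  let u : box n e a × box n e b → MvPolynomial (Fin (e + 1)) K :=
    fun x => MvPolynomial.monomial x.1.1 1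
  let v : box n e a × box n e b → MvPolynomial (Fin (e + 1)) K :=
    fun x => MvPolynomial.monomial x.2.1 1
  have hu : ∀ x, (u x).totalDegree ≤ a + δ := fun x => monomial_totalDegree he x.1
  have hv : ∀ x, (v x).totalDegree ≤ b + δ := fun x => monomial_totalDegree he x.2
  -- cyclic shift of the variables; `k + 1` is taken in `Fin (e + 1)`
  let sh : MvPolynomial (Fin (e + 1)) K →ₐ[K] MvPolynomial (Fin (e + 1)) K :=
    MvPolynomial.rename (fun k => k + 1)
  let Fm : ℕ → (box n e a × box n e b → K) →ₗ[K] MvPolynomial (Fin (e + 1)) K := fun m =>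
    Fintype.linearCombination K (fun x => (D K n e)^[m] (u x) * sh (v x))
  have hFm : ∀ m c, (Fm m c).totalDegree ≤ a + δ + (b + δ) + m * (e * (n - 1)) := by
    intro m c
    simp only [Fm, Fintype.linearCombination_apply]
    refine (MvPolynomial.totalDegree_finsetSum _ _).trans (Finset.sup_le fun x _ => ?_)
    refine (MvPolynomial.totalDegree_smul_le _ _).trans ?_
    refine (MvPolynomial.totalDegree_mul _ _).trans ?_
    have h1 := D_iter_totalDegree (n := n) m (u x)
    have h2 := MvPolynomial.totalDegree_rename_le (fun k : Fin (e + 1) => k + 1) (v x)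
    have h3 := hu x
    have h4 := hv x
    simp only [sh]
    omega
  let Wm : Fin M → Submodule K (PowerSeries K) :=
    fun m => G.W e (a + δ + (b + δ) + m.val * (e * (n - 1)))
  have : ∀ m, Module.Finite K (Wm m) := fun m => G.W_finite hn he _
  let L : (box n e a × box n e b → K) →ₗ[K] (∀ m : Fin M, Wm m) :=
    LinearMap.pi fun m => ((MvPolynomial.aeval (R := K) (G.z e)).toLinearMap ∘ₗ Fm m.val).codRestrict
      (Wm m) fun c => G.aeval_mem_W (hFm m.val c)
  have hker : LinearMap.ker L ≠ ⊥ := by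
    apply LinearMap.ker_ne_bot_of_finrank_lt
    rw [Module.finrank_fintype_fun_eq_card, Fintype.card_prod, Fintype.card_coe, Fintype.card_coe,
      card_box, card_box, Module.finrank_pi_fintype]
    refine lt_of_le_of_lt ?_ hcount
    rw [← Fin.sum_univ_eq_sum_range (fun m => rk n e * (a + δ + (b + δ) + m * (e * (n - 1)) + 1))]
    exact Finset.sum_le_sum fun m _ => G.finrank_W hn he _
  obtain ⟨c, hc, hc0⟩ := Submodule.exists_mem_ne_zero_of_ne_bot hker
  have hc' : ∀ m < M, MvPolynomial.aeval (G.z e) (Fm m c) = 0 := by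
    intro m hm
    have := congrFun (LinearMap.mem_ker.1 hc) ⟨m, hm⟩
    exact congrArg Subtype.val this
  refine ⟨∑ x, c x • (u x * v x ^ p), ?_, ?_, ?_⟩
  · refine (MvPolynomial.totalDegree_finsetSum _ _).trans (Finset.sup_le fun x _ => ?_)
    refine (MvPolynomial.totalDegree_smul_le _ _).trans ?_
    refine (MvPolynomial.totalDegree_mul _ _).trans ?_
    have h2 := MvPolynomial.totalDegree_pow (v x) p
    have h3 := hu x
    have h4 := Nat.mul_le_mul_left p (hv x)
    omega
  · intro h0
    apply hc0
    let vl : box n e b → PowerSeries K := fun l =>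
      MvPolynomial.aeval (G.z e) (comb (box n e a) fun k => c (k, l))
    let bl : box n e b → PowerSeries K := fun l =>
      MvPolynomial.aeval (G.z e) (MvPolynomial.monomial l.1 (1 : K))
    have hvl : ∀ l ∈ Finset.univ, vl l = 0 := by
      refine frob_indep p (G.W e (a + δ)) ?_ _ (Finset.univ : Finset (box n e b)) rfl bl vl
        ?_ ?_ ?_
      · rintro _ ⟨g, hg, rfl⟩ hne hdvd
        have := G.order_lemma hn he (a + δ) p g
          ((MvPolynomial.mem_restrictTotalDegree _ _ _).1 hg) hne hdvd
        exact absurd this (not_le.2 hO)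
      · intro s hs l _
        have h1 : MvPolynomial.aeval (G.z e) (comb (box n e b) s) = 0 := by
          rw [comb, Fintype.linearCombination_apply, map_sum, ← hs]
          simp only [map_smul, bl]
        rw [G.comb_eq_zero he b s h1]; rfl
      · intro l
        exact G.aeval_mem_W (comb_totalDegree he a _)
      · rw [← h0, map_sum, Fintype.sum_prod_type_right]
        refine Finset.sum_congr rfl fun l _ => ?_
        simp only [vl, comb, Fintype.linearCombination_apply, map_sum, Finset.sum_mul, map_smul,
          map_mul, map_pow, u, v, bl, smul_mul_assoc]
    funext x
    have := G.comb_eq_zero he a _ (hvl x.2 (Finset.mem_univ _))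
    exact congrFun this x.1
  · intro P hP hf hPp
    refine Van.of_forall fun m hm => ?_
    rw [D_iter_sum]
    have h1 := relIdeal_aeval P hP hf (G.mem_relIdeal hn he _ (hc' m hm))
    rw [← h1]
    simp only [Fm, Fintype.linearCombination_apply, map_sum, map_smul, map_mul, map_pow]
    refine Finset.sum_congr rfl fun x _ => ?_
    congr 2
    simp only [sh, v]
    rw [MvPolynomial.aeval_rename, MvPolynomial.aeval_monomial, MvPolynomial.aeval_monomial]
    rw [Finsupp.prod_fintype _ _ (by simp), Finsupp.prod_fintype _ _ (by simp), map_one, one_mul,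
      one_mul, ← Finset.prod_pow]
    refine Finset.prod_congr rfl fun k _ => ?_
    rw [Function.comp_apply, ← hPp, pow_right_comm]

/-- An upper bound for the number of noncritical `α` with Frobenius orbit of length exactly `e + 1` and
`α ^ n - α ∈ 𝔽_p`. -/
lemma GenPt.stepanov (G : GenPt K n) (p : ℕ) [Fact p.Prime] [CharP K p] (hn : 2 ≤ n)
    (he : e + 1 ≤ n) (a b M : ℕ) (hM : M ≤ p)
    (hO : rk n e * (a + (n - 1) * (n - 2) / 2 + (n - 1) * (n - 2) / 2) < p)
    (hcount : ∑ m ∈ Finset.range M, rk n e * (a + (n - 1) * (n - 2) / 2 +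
      (b + (n - 1) * (n - 2) / 2) + m * (e * (n - 1)) + 1) < rk n e * (a + 1) * (rk n e * (b + 1)))
    (A : Finset K) (hper : ∀ α ∈ A, α ^ p ^ (e + 1) = α)
    (hinj : ∀ α ∈ A, ∀ i < e + 1, ∀ j < e + 1, α ^ p ^ i = α ^ p ^ j → i = j)
    (hf : ∀ α ∈ A, (α ^ n - α) ^ p = α ^ n - α)
    (hf' : ∀ α ∈ A, (n : K) * α ^ (n - 1) - 1 ≠ 0) :
    A.card * M ≤ rk n e * (a + (n - 1) * (n - 2) / 2 + p * (b + (n - 1) * (n - 2) / 2) +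
      (n - 1) * (n - 2) / 2) := by
  classical
  obtain ⟨F, hFd, hF0, hFv⟩ := G.stepanov_aux p hn he a b M hO hcount
  let Pt : K → Fin (e + 1) → K := fun α k => α ^ p ^ k.val
  have hPt0 : ∀ α, Pt α 0 = α := fun α => by simp [Pt]
  have hPtinj : Function.Injective Pt := fun α β h => by
    rw [← hPt0 α, ← hPt0 β, h]
  have hfrob : ∀ α ∈ A, ∀ k : ℕ, (α ^ p ^ k) ^ n - α ^ p ^ k = α ^ n - α := by
    intro α hα k
    rw [pow_right_comm, ← sub_pow_char_pow]
    induction k with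
    | zero => simp
    | succ k ih => rw [pow_succ, pow_mul, ih, hf α hα]
  have key : ∀ α ∈ A, Function.Injective (Pt α) ∧
      (∀ k, Pt α k ^ n - Pt α k = Pt α 0 ^ n - Pt α 0) ∧ (∀ k, Pt α k ^ p = Pt α (k + 1)) := by
    intro α hα
    refine ⟨fun i j h => Fin.ext (hinj α hα i i.2 j j.2 h), fun k => ?_, fun k => ?_⟩
    · rw [hPt0]; exact hfrob α hα k
    · simp only [Pt]
      rw [← pow_mul, ← pow_succ]
      by_cases hk : k = Fin.last e
      · subst hk
        simp [hper α hα]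
      · rw [Fin.val_add_one_of_lt (Fin.lt_last_iff_ne_last.2 hk)]
  have := G.zeros p hn he _ M hM F hFd hF0 (A.image Pt) ?_ ?_ ?_ ?_ ?_
  · rwa [Finset.card_image_of_injective _ hPtinj] at this
  · simp only [Finset.mem_image]
    rintro _ ⟨α, -, rfl⟩ _ ⟨β, -, rfl⟩ h
    rw [hPt0, hPt0] at h
    rw [h]
  · simp only [Finset.mem_image]
    rintro _ ⟨α, hα, rfl⟩
    exact (key α hα).1
  · simp only [Finset.mem_image]
    rintro _ ⟨α, hα, rfl⟩
    exact (key α hα).2.1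
  · simp only [Finset.mem_image]
    rintro _ ⟨α, hα, rfl⟩ l h
    apply pow_ne_zero (p ^ l.val) (hf' α hα)
    rw [sub_pow_char_pow, mul_pow, one_pow, ← pow_mul, mul_comm (n - 1), pow_mul]
    have : ((n : K)) ^ p ^ l.val = n := by
      have := map_natCast (iterateFrobenius K p l.val) n
      rwa [iterateFrobenius_def] at this
    rw [this]
    exact h
  · simp only [Finset.mem_image]
    rintro _ ⟨α, hα, rfl⟩
    exact hFv _ (key α hα).1 (key α hα).2.1 (key α hα).2.2

end

/-! ### Two-transitivity of the relations between roots -/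

/-- Elements of `Ω₁` algebraic over `M` can be transported to `Ω₂` by extending the embedding of `M`,
and algebraic relations over `K` are preserved. -/
lemma lift_rel_aux {K M Ω₁ Ω₂ ι : Type*} [Field K] [Field M] [Field Ω₁] [Field Ω₂] [IsAlgClosed Ω₂]
    [Algebra K Ω₁] [Algebra K Ω₂] [Algebra M Ω₁] [Algebra M Ω₂] (i : K →+* M)
    (h1 : ∀ x, algebraMap M Ω₁ (i x) = algebraMap K Ω₁ x)
    (h2 : ∀ x, algebraMap M Ω₂ (i x) = algebraMap K Ω₂ x)
    (Y : ι → Ω₁) (hY : ∀ k, IsIntegral M (Y k)) :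
    ∃ Y' : ι → Ω₂, (∀ k (m : M), Y k = algebraMap M Ω₁ m → Y' k = algebraMap M Ω₂ m) ∧
      ∀ g : MvPolynomial ι K, MvPolynomial.aeval Y' g = 0 ↔ MvPolynomial.aeval Y g = 0 := by
  let F := IntermediateField.adjoin M (Set.range Y)
  have halg : Algebra.IsAlgebraic M F := IntermediateField.isAlgebraic_adjoin (by
    rintro _ ⟨k, rfl⟩; exact hY k)
  let ψ : F →ₐ[M] Ω₂ := IsAlgClosed.lift
  let YF : ι → F := fun k => ⟨Y k, IntermediateField.subset_adjoin _ _ ⟨k, rfl⟩⟩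
  refine ⟨fun k => ψ (YF k), fun k m hm => ?_, fun g => ?_⟩
  · have : YF k = algebraMap M F m := Subtype.ext hm
    change ψ (YF k) = _
    rw [this, AlgHom.commutes]
  · have e1 : MvPolynomial.aeval (fun k => ψ (YF k)) g =
        ψ (MvPolynomial.eval₂ ((algebraMap M F).comp i) YF g) := by
      rw [MvPolynomial.aeval_def, ← AlgHom.coe_toRingHom, MvPolynomial.hom_eval₂]
      congr 1
      ext x
      simp [h2]
    have e2 : MvPolynomial.aeval Y g =
        algebraMap F Ω₁ (MvPolynomial.eval₂ ((algebraMap M F).comp i) YF g) := by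
      rw [MvPolynomial.aeval_def, MvPolynomial.hom_eval₂]
      congr 1
      ext x
      simp only [RingHom.comp_apply]
      rw [← h1]; rfl
    rw [e1, e2, map_eq_zero, map_eq_zero]

/-- If `φ₀` and `φ₁` have the same kernel, elements algebraic over the fraction field of the image of
`φ₀` can be transported along `φ₁`, preserving algebraic relations over `K`. -/
lemma lift_rel {K R Ω ι : Type*} [Field K] [CommRing R] [Field Ω] [IsAlgClosed Ω]
    [Algebra K Ω] (i : K →+* R) (φ₀ φ₁ : R →+* Ω) (hker : RingHom.ker φ₀ = RingHom.ker φ₁)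
    (h1 : ∀ x, φ₀ (i x) = algebraMap K Ω x) (h2 : ∀ x, φ₁ (i x) = algebraMap K Ω x)
    (Y : ι → Ω) (hY : ∀ k, ∃ q : R[X], q.map φ₀ ≠ 0 ∧ q.eval₂ φ₀ (Y k) = 0) :
    ∃ Y' : ι → Ω, (∀ k (a b : R), Y k * φ₀ a = φ₀ b → φ₀ a ≠ 0 → Y' k * φ₁ a = φ₁ b) ∧
      ∀ g : MvPolynomial ι K, MvPolynomial.aeval Y' g = 0 ↔ MvPolynomial.aeval Y g = 0 := by
  have hp : (RingHom.ker φ₀).IsPrime := RingHom.ker_isPrime φ₀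
  let Q := R ⧸ RingHom.ker φ₀
  let M := FractionRing Q
  let q₀ : Q →+* Ω := Ideal.Quotient.lift _ φ₀ fun a ha => ha
  let q₁ : Q →+* Ω := Ideal.Quotient.lift _ φ₁ fun a ha => by rw [hker] at ha; exact ha
  have hq₀ : Function.Injective q₀ := RingHom.lift_injective_of_ker_le_ideal _ _ le_rfl
  have hq₁ : Function.Injective q₁ := RingHom.lift_injective_of_ker_le_ideal _ _ hker.ge
  let j₀ : M →+* Ω := IsFractionRing.lift hq₀
  let j₁ : M →+* Ω := IsFractionRing.lift hq₁
  let π : R →+* M := (algebraMap Q M).comp (Ideal.Quotient.mk _)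
  have hj₀ : ∀ a, j₀ (π a) = φ₀ a := fun a => by
    simp only [j₀, π, RingHom.comp_apply, IsFractionRing.lift_algebraMap]
    exact Ideal.Quotient.lift_mk _ _ _
  have hj₁ : ∀ a, j₁ (π a) = φ₁ a := fun a => by
    simp only [j₁, π, RingHom.comp_apply, IsFractionRing.lift_algebraMap]
    exact Ideal.Quotient.lift_mk _ _ _
  obtain ⟨Y', hY', hg⟩ := @lift_rel_aux K M Ω Ω ι _ _ _ _ _ _ _ j₀.toAlgebra j₁.toAlgebra
    (π.comp i) (fun x => (hj₀ (i x)).trans (h1 x)) (fun x => (hj₁ (i x)).trans (h2 x)) Y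
    (fun k => by
      obtain ⟨q, hq, hq0⟩ := hY k
      let _ : Algebra M Ω := j₀.toAlgebra
      refine IsAlgebraic.isIntegral ⟨q.map π, fun h0 => hq ?_, ?_⟩
      · rw [← show j₀.comp π = φ₀ from RingHom.ext hj₀, ← Polynomial.map_map, h0,
          Polynomial.map_zero]
      change (q.map π).eval₂ j₀ (Y k) = 0
      rw [eval₂_map, show j₀.comp π = φ₀ from RingHom.ext hj₀, hq0])
  refine ⟨Y', fun k a b hab ha => ?_, hg⟩
  have hπa : π a ≠ 0 := fun h => ha (by rw [← hj₀, h, map_zero])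
  have hb : Y k = j₀ (π b / π a) := by
    rw [map_div₀, hj₀, hj₀, eq_div_iff ha, hab]
  have := hY' k (π b / π a) hb
  change Y' k = j₁ (π b / π a) at this
  rw [this, ← hj₁ a, ← map_mul, div_mul_cancel₀ _ hπa, hj₁]

section
variable {K : Type*} [Field K]

/-- Some `n`-th root of unity other than `1` is a simple root of `1 + T + ⋯ + T ^ (n - 1)`. -/
lemma exists_simple_root [IsAlgClosed K] {n : ℕ} (hn : 2 ≤ n) (hnK : (n : K) ≠ 0) :
    ∃ ζ : K, (X - C ζ) ∣ (∑ i ∈ Finset.range n, X ^ i : K[X]) ∧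
      ¬ (X - C ζ) ^ 2 ∣ (∑ i ∈ Finset.range n, X ^ i : K[X]) := by
  have hgeom : (∑ i ∈ Finset.range n, X ^ i : K[X]) * (X - 1) = X ^ n - 1 := geom_sum_mul X n
  have hdeg : (∑ i ∈ Finset.range n, X ^ i : K[X]).degree ≠ 0 := by
    intro h
    have h1 := congrArg degree hgeom
    rw [degree_mul, h, zero_add, ← C_1, degree_X_sub_C, degree_X_pow_sub_C (by omega)] at h1
    have : 1 = n := by exact_mod_cast h1
    omega
  obtain ⟨ζ, hζ⟩ := IsAlgClosed.exists_root _ hdeg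
  refine ⟨ζ, dvd_iff_isRoot.2 hζ, fun hdvd => ?_⟩
  have hsep : (X ^ n - 1 : K[X]).Separable := by
    have := separable_X_pow_sub_C (1 : K) hnK one_ne_zero
    simpa using this
  have h2 : (X - C ζ) * (X - C ζ) ∣ X ^ n - 1 := by
    rw [← pow_two, ← hgeom]; exact hdvd.mul_right _
  exact not_isUnit_X_sub_C ζ (hsep.squarefree _ h2)

/-- Eisenstein at a simple root of `1 + T + ⋯ + T ^ (n - 1)`. -/
lemma irreducible_eis [IsAlgClosed K] {n : ℕ} (hn : 2 ≤ n) (hnK : (n : K) ≠ 0) :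
    Irreducible (X ^ (n - 1) - C (∑ i ∈ Finset.range n, X ^ i : K[X]) : K[X][X]) := by
  obtain ⟨ζ, h1, h2⟩ := exists_simple_root hn hnK
  set h : K[X] := ∑ i ∈ Finset.range n, X ^ i
  have hmon : (X ^ (n - 1) - C h : K[X][X]).Monic := monic_X_pow_sub_C h (by omega)
  have hnd : (X ^ (n - 1) - C h : K[X][X]).natDegree = n - 1 := natDegree_X_pow_sub_C
  have hprime : (Ideal.span {X - C ζ} : Ideal K[X]).IsPrime :=
    (Ideal.span_singleton_prime (X_sub_C_ne_zero ζ)).2 (prime_X_sub_C ζ)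
  refine IsEisensteinAt.irreducible (𝓟 := Ideal.span {X - C ζ}) ⟨?_, ?_, ?_⟩ hprime
    hmon.isPrimitive (by omega)
  · rw [hmon.leadingCoeff]
    exact fun h => hprime.ne_top ((Ideal.eq_top_iff_one _).2 h)
  · intro m hm
    rw [hnd] at hm
    rw [coeff_sub, coeff_X_pow, if_neg (by omega), zero_sub, coeff_C]
    split_ifs
    · exact neg_mem (Ideal.mem_span_singleton.2 h1)
    · simp
  · rw [coeff_sub, coeff_X_pow, if_neg (by omega), zero_sub, coeff_C_zero, Ideal.span_singleton_pow,
      Ideal.mem_span_singleton, dvd_neg]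
    exact h2

lemma isIntegral_mem_range [IsAlgClosed K] {Ω : Type*} [Field Ω] [Algebra K Ω] {x : Ω}
    (hx : IsIntegral K x) : ∃ a, algebraMap K Ω a = x :=
  minpoly.mem_range_of_degree_eq_one K x
    (IsAlgClosed.degree_eq_one_of_irreducible K (minpoly.irreducible hx))

lemma ker_aux {Ω : Type*} [Field Ω] [Algebra K[X] Ω]
    (hinj : Function.Injective (algebraMap K[X] Ω)) (E : K[X][X]) (hE : Irreducible E)
    (hmon : E.Monic) (v : Ω) (hv : aeval v E = 0) (q : K[X][X]) : aeval v q = 0 ↔ E ∣ q := by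
  have : Module.IsTorsionFree K[X] Ω := Module.isTorsionFree_iff_algebraMap_injective.2 hinj
  have hint : IsIntegral K[X] v := ⟨E, hmon, hv⟩
  constructor
  · intro hq
    have h1 := minpoly.isIntegrallyClosed_dvd hint hv
    have h2 := minpoly.isIntegrallyClosed_dvd hint hq
    obtain ⟨r, hr⟩ := h1
    rcases hE.isUnit_or_isUnit hr with hu | hu
    · exact absurd hu (minpoly.not_isUnit _ _)
    · rw [hr]
      exact hu.mul_right_dvd.2 h2
  · rintro ⟨r, rfl⟩
    rw [map_mul, hv, zero_mul]

/-- Permutations that preserve the relations between the roots act `2`-transitively. A pair of distinct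
roots `(Y_a, Y_b)` is determined by `v = Y_a⁻¹` and `s = Y_b / Y_a`, whose only relation is the
irreducible equation `v ^ (n - 1) = 1 + s + ⋯ + s ^ (n - 1)`. All such pairs are therefore
conjugate. -/
lemma two_trans [IsAlgClosed K] {Ω : Type*} [Field Ω] [IsAlgClosed Ω] [Algebra K Ω] {n : ℕ}
    (hn : 2 ≤ n) (hnK : (n : K) ≠ 0) (Y : Fin n → Ω) (hinj : Function.Injective Y)
    (hroot : ∀ i j, Y i ^ n - Y i = Y j ^ n - Y j) (htr : ∀ k, Transcendental K (Y k))
    {a₀ b₀ a b : Fin n} (hab₀ : a₀ ≠ b₀) (hab : a ≠ b) :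
    ∃ π : Equiv.Perm (Fin n), π a₀ = a ∧ π b₀ = b ∧
      ∀ g : MvPolynomial (Fin n) K, MvPolynomial.aeval Y g = 0 →
        MvPolynomial.aeval (Y ∘ π) g = 0 := by
  set h : K[X] := ∑ i ∈ Finset.range n, X ^ i with hh
  set E : K[X][X] := X ^ (n - 1) - C h with hE
  have hEirr : Irreducible E := irreducible_eis hn hnK
  have hEmon : E.Monic := monic_X_pow_sub_C h (by omega)
  have hY0 : ∀ k, Y k ≠ 0 := fun k hk => htr k (by rw [hk]; exact isAlgebraic_zero)
  have hrel : ∀ a b : Fin n, a ≠ b → (Y a)⁻¹ ^ (n - 1) = aeval (Y b / Y a) h := by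
    intro a b hab
    have hs1 : Y b / Y a - 1 ≠ 0 := by
      rw [sub_ne_zero, Ne, div_eq_one_iff_eq (hY0 a)]
      exact fun h => hab (hinj h).symm
    have hg : aeval (Y b / Y a) h * (Y b / Y a - 1) = (Y b / Y a) ^ n - 1 := by
      rw [hh, map_sum]
      simp only [map_pow, aeval_X]
      exact geom_sum_mul _ n
    apply mul_right_cancel₀ hs1
    rw [hg]
    have h1 := hroot b a
    have h0 := hY0 a
    obtain ⟨m, rfl⟩ : ∃ m, n = m + 1 := ⟨n - 1, by omega⟩
    simp only [Nat.add_sub_cancel]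
    rw [inv_pow, div_pow]
    have h2 : Y b ^ (m + 1) = Y a ^ (m + 1) + Y b - Y a := by linear_combination h1
    rw [h2]
    field_simp
    ring
  have hstr : ∀ a b : Fin n, a ≠ b → Transcendental K (Y b / Y a) := by
    intro a b hab hs
    obtain ⟨σ, hσ⟩ := isIntegral_mem_range hs.isIntegral
    have h1 := hrel a b hab
    rw [← hσ, aeval_algebraMap_apply] at h1
    refine htr a ?_
    rw [← IsAlgebraic.inv_iff]
    refine ⟨X ^ (n - 1) - C (aeval σ h), (monic_X_pow_sub_C _ (by omega)).ne_zero, ?_⟩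
    simp [h1]
  let φ : Fin n → Fin n → K[X][X] →+* Ω := fun a b =>
    eval₂RingHom (aeval (R := K) (Y b / Y a)).toRingHom (Y a)⁻¹
  have hφker : ∀ a b : Fin n, a ≠ b → RingHom.ker (φ a b) = Ideal.span {E} := by
    intro a b hab
    ext q
    rw [RingHom.mem_ker, Ideal.mem_span_singleton]
    let _ : Algebra K[X] Ω := (aeval (R := K) (Y b / Y a)).toRingHom.toAlgebra
    refine ker_aux (transcendental_iff_injective.1 (hstr a b hab)) E hEirr hEmon (Y a)⁻¹ ?_ q
    rw [hE, map_sub, map_pow, aeval_X, aeval_C, hrel a b hab]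
    exact sub_self _
  have hφC : ∀ a b x, φ a b ((C : K[X] →+* K[X][X]).comp C x) = algebraMap K Ω x := by
    intro a b x
    simp [φ]
  have hφX : ∀ a b, φ a b X = (Y a)⁻¹ := fun a b => by simp [φ]
  have hφCX : ∀ a b, φ a b (C X) = Y b / Y a := fun a b => by simp [φ]
  have hYalg : ∀ k, ∃ q : K[X][X][X],
      q.map (φ a₀ b₀) ≠ 0 ∧ q.eval₂ (φ a₀ b₀) (Y k) = 0 := by
    intro k
    obtain ⟨u, hu⟩ : ∃ u : K[X][X], φ a₀ b₀ u = (Y a₀)⁻¹ ^ n := ⟨X ^ n, by rw [map_pow, hφX]⟩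
    obtain ⟨w, hw⟩ : ∃ w : K[X][X], φ a₀ b₀ w = 1 - (Y a₀)⁻¹ ^ (n - 1) :=
      ⟨1 - X ^ (n - 1), by rw [map_sub, map_one, map_pow, hφX]⟩
    refine ⟨C u * X ^ n - C u * X - C w, fun h0 => ?_, ?_⟩
    · have := congrArg (fun q => coeff q n) h0
      simp only [Polynomial.map_sub, Polynomial.map_mul, Polynomial.map_C, Polynomial.map_pow,
        Polynomial.map_X, coeff_sub, coeff_C_mul, coeff_X_pow, coeff_X, coeff_C, coeff_zero,
        if_true, if_neg (show 1 ≠ n by omega), if_neg (show n ≠ 0 by omega), hu] at this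
      simp [hY0] at this
    · have h1 := hroot k a₀
      have h0 := hY0 a₀
      simp only [eval₂_sub, eval₂_mul, eval₂_C, eval₂_X, eval₂_X_pow, hu, hw]
      obtain ⟨m, rfl⟩ : ∃ m, n = m + 1 := ⟨n - 1, by omega⟩
      simp only [Nat.add_sub_cancel, inv_pow]
      have h2 : Y k ^ (m + 1) = Y a₀ ^ (m + 1) + Y k - Y a₀ := by linear_combination h1
      rw [h2]
      field_simp
      ring
  obtain ⟨Y', hY', hg⟩ := lift_rel (K := K) ((C : K[X] →+* K[X][X]).comp C) (φ a₀ b₀) (φ a b)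
    (by rw [hφker _ _ hab₀, hφker _ _ hab]) (hφC _ _) (hφC _ _) Y hYalg
  · have hYa : Y' a₀ = Y a := by
      have := hY' a₀ X 1 (by rw [hφX, map_one, mul_inv_cancel₀ (hY0 _)])
        (by rw [hφX]; exact inv_ne_zero (hY0 _))
      rwa [hφX, map_one, mul_inv_eq_one₀ (hY0 _)] at this
    have hYb : Y' b₀ = Y b := by
      have := hY' b₀ X (C X) (by rw [hφX, hφCX, div_eq_mul_inv])
        (by rw [hφX]; exact inv_ne_zero (hY0 _))
      rw [hφX, hφCX, div_eq_mul_inv] at this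
      exact mul_right_cancel₀ (inv_ne_zero (hY0 _)) this
    have hY'inj : Function.Injective Y' := by
      intro i j hij
      have := (hg (MvPolynomial.X i - MvPolynomial.X j)).1 (by simp [hij])
      exact hinj (by simpa [sub_eq_zero] using this)
    have hY'root : ∀ k, Y' k ^ n - Y' k = Y a ^ n - Y a := by
      intro k
      have := (hg (MvPolynomial.X k ^ n - MvPolynomial.X k -
        (MvPolynomial.X a₀ ^ n - MvPolynomial.X a₀))).2 (by simp [hroot k a₀])
      rw [← hYa]
      simpa [sub_eq_zero] using this
    have hex : ∀ k, ∃ l, Y l = Y' k := by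
      intro k
      by_contra hcon
      push Not at hcon
      let P : (Polynomial Ω) := X ^ n - (X + C (Y a ^ n - Y a))
      have hdlt : (X + C (Y a ^ n - Y a) : (Polynomial Ω)).degree < (n : WithBot ℕ) := by
        rw [degree_X_add_C]; exact_mod_cast hn
      have hPm : P.Monic := monic_X_pow_sub hdlt
      have hPd : P.natDegree = n := by
        rw [natDegree_sub_eq_left_of_natDegree_lt, natDegree_X_pow]
        rw [natDegree_X_add_C, natDegree_X_pow]; omega
      refine hPm.ne_zero (eq_zero_of_natDegree_lt_card_of_eval_eq_zero P
        (f := fun o : Option (Fin n) => o.elim (Y' k) Y) ?_ ?_ ?_)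
      · rintro (_ | i) (_ | j) hij
        · rfl
        · exact absurd hij.symm (hcon j)
        · exact absurd hij (hcon i)
        · exact congrArg some (hinj hij)
      · rintro (_ | i)
        · have := hY'root k
          simp only [P, Option.elim, eval_sub, eval_pow, eval_X, eval_add, eval_C]
          linear_combination this
        · have := hroot i a
          simp only [P, Option.elim, eval_sub, eval_pow, eval_X, eval_add, eval_C]
          linear_combination this
      · simp [hPd]
    choose π hπ using hex
    have hπinj : Function.Injective π := fun i j hij => hY'inj (by rw [← hπ, ← hπ, hij])
    refine ⟨Equiv.ofBijective π (Finite.injective_iff_bijective.1 hπinj), ?_, ?_, ?_⟩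
    · exact hinj (by simp [hπ, hYa])
    · exact hinj (by simp [hπ, hYb])
    · intro g hg0
      rw [← hg g] at hg0
      rw [← hg0]
      congr 2
      funext k
      simp [hπ]

end

/-! ### Critical values, Hensel lifting of power series, and permutations of relations -/

section Roots
variable {K : Type*} [Field K]

/-- A critical point `c` of `X ^ n - X` with `n = N + 2`: its critical value is attained doubly at `c`
and simply at `N` other points, because `x ^ n - x = x (1 / n - 1)` takes distinct values at distinct
critical points. -/
lemma exists_crit_roots [IsAlgClosed K] (N : ℕ) (hnK : ((N + 2 : ℕ) : K) ≠ 0)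
    (hn1 : ((N + 1 : ℕ) : K) ≠ 0) (h2 : (2 : K) ≠ 0) :
    ∃ (c : K) (β : Fin N → K), c ≠ 0 ∧ ((N + 2 : ℕ) : K) * c ^ (N + 1) = 1 ∧
      Function.Injective β ∧ ∀ k, β k ≠ c ∧ β k ^ (N + 2) - β k = c ^ (N + 2) - c ∧
        ((N + 2 : ℕ) : K) * β k ^ (N + 1) - 1 ≠ 0 := by
  classical
  obtain ⟨c, hc⟩ := IsAlgClosed.exists_pow_nat_eq (((N + 2 : ℕ) : K)⁻¹) (Nat.succ_pos N)
  have hc1 : ((N + 2 : ℕ) : K) * c ^ (N + 1) = 1 := by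
    rw [hc, mul_inv_cancel₀ hnK]
  have hc0 : c ≠ 0 := by rintro rfl; simp at hc1
  set g : K[X] := X ^ (N + 2) - (X + C (c ^ (N + 2) - c)) with hg
  have hgm : g.Monic := monic_X_pow_sub (by
    rw [degree_X_add_C]; exact_mod_cast (by omega : 1 < N + 2))
  have hgd : g.natDegree = N + 2 := by
    rw [hg, natDegree_sub_eq_left_of_natDegree_lt, natDegree_X_pow]
    rw [natDegree_X_add_C, natDegree_X_pow]; omega
  have hg0 : g ≠ 0 := hgm.ne_zero
  have hev : ∀ x, g.eval x = x ^ (N + 2) - x - (c ^ (N + 2) - c) := by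
    intro x; simp [hg]; ring
  have hg' : g.derivative = C ((N + 2 : ℕ) : K) * X ^ (N + 1) - 1 := by
    rw [hg, derivative_sub, derivative_X_pow, derivative_add, derivative_X, derivative_C, add_zero]
    rfl
  have hev' : ∀ x, g.derivative.eval x = ((N + 2 : ℕ) : K) * x ^ (N + 1) - 1 := by
    intro x; rw [hg']; simp
  have hcrit : ∀ x, g.eval x = 0 → g.derivative.eval x = 0 → x = c := by
    intro x h1 h3
    rw [hev] at h1
    rw [hev'] at h3
    have h4 : (((N + 2 : ℕ) : K) - 1) * (c - x) = 0 := by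
      linear_combination ((N + 2 : ℕ) : K) * h1 - x * h3 + c * hc1
    have h5 : ((N + 2 : ℕ) : K) - 1 ≠ 0 := by
      intro h; apply hn1; push_cast at h ⊢; linear_combination h
    have := (mul_eq_zero.1 h4).resolve_left h5
    exact (sub_eq_zero.1 this).symm
  have hcount : g.roots.count c = 2 := by
    rw [count_roots]
    apply le_antisymm
    · by_contra hlt
      push Not at hlt
      have := (lt_rootMultiplicity_iff_isRoot_iterate_derivative_of_mem_nonZeroDivisors hg0 (n := 2)
        (mem_nonZeroDivisors_of_ne_zero (by simpa using h2))).1 hlt 2 le_rfl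
      rw [Function.iterate_succ_apply', Function.iterate_one, hg', IsRoot] at this
      simp at this
      rcases this with h | h | h
      · exact hnK (by push_cast; exact h)
      · exact hn1 (by push_cast; exact h)
      · exact hc0 h.1
    · exact (one_lt_rootMultiplicity_iff_isRoot hg0).2 ⟨by rw [IsRoot, hev]; ring, by
        rw [IsRoot, hev', hc1, sub_self]⟩
  have hcard : g.roots.card = N + 2 := by
    rw [← (IsAlgClosed.splits g).natDegree_eq_card_roots, hgd]
  set S := g.roots.filter (· ≠ c) with hS
  have hScard : S.card = N := by
    have h := Multiset.filter_add_not (· = c) g.roots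
    have := congrArg Multiset.card h
    rw [Multiset.card_add, hcard, ← Multiset.countP_eq_card_filter] at this
    have h3 : Multiset.countP (· = c) g.roots = 2 := by
      rw [← hcount, Multiset.count]; congr 1; funext x; simp [eq_comm]
    rw [h3] at this
    change 2 + S.card = N + 2 at this
    omega
  have hSmem : ∀ x ∈ S, x ≠ c ∧ g.eval x = 0 := fun x hx => by
    rw [hS, Multiset.mem_filter, mem_roots hg0] at hx
    exact ⟨hx.2, hx.1⟩
  have hSnd : S.Nodup := by
    rw [Multiset.nodup_iff_count_le_one]
    intro x
    by_cases hx : x ∈ S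
    · by_contra hlt
      push Not at hlt
      have h3 : 1 < g.rootMultiplicity x := by
        rw [← count_roots]
        exact hlt.trans_le (Multiset.count_le_of_le _ (Multiset.filter_le _ _))
      have h4 := (one_lt_rootMultiplicity_iff_isRoot hg0).1 h3
      exact (hSmem x hx).1 (hcrit x h4.1 h4.2)
    · rw [Multiset.count_eq_zero_of_notMem hx]; omega
  let e : Fin N ≃ S.toFinset := Fintype.equivOfCardEq (by
    rw [Fintype.card_fin, Fintype.card_coe, Multiset.toFinset_card_of_nodup hSnd, hScard])
  refine ⟨c, fun k => (e k : K), hc0, hc1, fun a b hab => e.injective (Subtype.ext hab),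
    fun k => ?_⟩
  have hk := hSmem _ (Multiset.mem_toFinset.1 (e k).2)
  refine ⟨hk.1, ?_, fun h => hk.1 (hcrit _ hk.2 (by rw [hev', h]))⟩
  have := hk.2
  rw [hev] at this
  exact sub_eq_zero.1 this

lemma hensel_ps (P : (PowerSeries K)[X]) (hP : P.Monic) (a : PowerSeries K)
    (h : PowerSeries.constantCoeff (P.eval a) = 0)
    (h' : PowerSeries.constantCoeff (P.derivative.eval a) ≠ 0) :
    ∃ b, P.eval b = 0 ∧ PowerSeries.constantCoeff b = PowerSeries.constantCoeff a := by
  have hH : HenselianRing (PowerSeries K) (Ideal.span {PowerSeries.X}) := inferInstance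
  obtain ⟨b, hb, hba⟩ := hH.is_henselian P hP a
    (Ideal.mem_span_singleton.2 (PowerSeries.X_dvd_iff.2 h))
    ((PowerSeries.isUnit_iff_constantCoeff.2 (isUnit_iff_ne_zero.2 h')).map _)
  refine ⟨b, hb, ?_⟩
  have := PowerSeries.X_dvd_iff.1 (Ideal.mem_span_singleton.1 hba)
  rwa [map_sub, sub_eq_zero] at this

lemma hensel_unique (P : (PowerSeries K)[X]) {a b : PowerSeries K}
    (ha : P.eval a = 0) (hb : P.eval b = 0)
    (hab : PowerSeries.constantCoeff a = PowerSeries.constantCoeff b)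
    (h' : PowerSeries.constantCoeff (P.derivative.eval a) ≠ 0) : a = b := by
  obtain ⟨k, hk⟩ := binomExpansion P a (b - a)
  rw [add_sub_cancel, ha, hb] at hk
  have h1 : (b - a) * (P.derivative.eval a + k * (b - a)) = 0 := by linear_combination -hk
  rcases mul_eq_zero.1 h1 with h | h
  · exact (sub_eq_zero.1 h).symm
  · refine absurd (congrArg PowerSeries.constantCoeff h) ?_
    simpa [hab] using h'

end Roots

section RelPerm
variable {K B ι : Type*} [CommRing K] [CommRing B] [Algebra K B]

/-- The permutation `π` preserves all algebraic relations over `K` between the elements `Y i`. -/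
def RelPerm (K : Type*) {B ι : Type*} [CommRing K] [CommRing B] [Algebra K B] (Y : ι → B)
    (π : Equiv.Perm ι) : Prop :=
  ∀ g : MvPolynomial ι K, MvPolynomial.aeval Y g = 0 → MvPolynomial.aeval (Y ∘ π) g = 0

lemma RelPerm.mul {Y : ι → B} {π σ : Equiv.Perm ι} (hπ : RelPerm K Y π) (hσ : RelPerm K Y σ) :
    RelPerm K Y (π * σ) := by
  intro g hg
  have h1 := hσ g hg
  rw [← MvPolynomial.aeval_rename] at h1
  have h3 := hπ _ h1
  rwa [MvPolynomial.aeval_rename] at h3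

lemma RelPerm.one (Y : ι → B) : RelPerm K Y 1 := fun _ hg => hg

lemma RelPerm.inv [Finite ι] {Y : ι → B} {π : Equiv.Perm ι} (hπ : RelPerm K Y π) :
    RelPerm K Y π⁻¹ := by
  have hpow : ∀ k : ℕ, RelPerm K Y (π ^ k) := by
    intro k
    induction k with
    | zero => exact RelPerm.one Y
    | succ k ih => rw [pow_succ]; exact ih.mul hπ
  have hpos := orderOf_pos π
  have : π⁻¹ = π ^ (orderOf π - 1) := by
    rw [inv_eq_iff_mul_eq_one, ← pow_succ', Nat.sub_add_cancel hpos, pow_orderOf_eq_one]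
  rw [this]; exact hpow _

end RelPerm

/-! ### Power series roots near a critical point -/

section Series
variable {K : Type*} [Field K]

/-- With `n = N + 2` and `y_0 = c + X` near a critical point `c`, all `n` roots of
`Y ^ n - Y = y_0 ^ n - y_0` are power series. Two of them, `y_0` and `y_1`, have constant term `c`,
and the substitution `X ↦ y_1 - c` exchanges these two and fixes the others. -/
lemma exists_series_roots [IsAlgClosed K] (N : ℕ) (hnK : ((N + 2 : ℕ) : K) ≠ 0)
    (hn1 : ((N + 1 : ℕ) : K) ≠ 0) (h2 : (2 : K) ≠ 0) :
    ∃ (c : K) (y : Fin (N + 2) → PowerSeries K), Function.Injective y ∧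
      y 0 = PowerSeries.C c + PowerSeries.X ∧
      (∀ k, y k ^ (N + 2) - y k = y 0 ^ (N + 2) - y 0) ∧ RelPerm K y (Equiv.swap 0 1) := by
  obtain ⟨c, β, hc0, hc, hβ, hβc⟩ := exists_crit_roots N hnK hn1 h2
  set y0 : PowerSeries K := PowerSeries.C c + PowerSeries.X with hy0
  have hcy0 : PowerSeries.constantCoeff y0 = c := by simp [hy0]
  set t := y0 ^ (N + 2) - y0 with ht
  set F : (PowerSeries K)[X] := X ^ (N + 2) - (X + C t) with hF
  have hFm : F.Monic := monic_X_pow_sub (by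
    rw [degree_X_add_C]; exact_mod_cast (by omega : 1 < N + 2))
  have hFev : ∀ z, F.eval z = z ^ (N + 2) - z - t := by
    intro z; simp [hF]; ring
  have hFev' : ∀ z, F.derivative.eval z = ((N + 2 : ℕ) : PowerSeries K) * z ^ (N + 1) - 1 := by
    intro z
    rw [hF, derivative_sub, derivative_X_pow, derivative_add, derivative_X, derivative_C, add_zero]
    simp
  have hη : ∀ k, ∃ η : PowerSeries K, F.eval η = 0 ∧ PowerSeries.constantCoeff η = β k := by
    intro k
    obtain ⟨b, hb, hb'⟩ := hensel_ps F hFm (PowerSeries.C (β k))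
      (by rw [hFev, map_sub, ht]; simp [hcy0, (hβc k).2.1])
      (by
        rw [hFev', map_sub, map_mul, map_pow, map_natCast, map_one, PowerSeries.constantCoeff_C]
        exact (hβc k).2.2)
    exact ⟨b, hb, by simpa using hb'⟩
  choose η hη hηβ using hη
  -- `Q = F / (X - y0)` still has `c` as a root of its reduction, now a simple one
  set Q : (PowerSeries K)[X] := (∑ i ∈ Finset.range (N + 2), X ^ i * (C y0) ^ (N + 2 - 1 - i)) - 1
    with hQ
  have hQF : Q * (X - C y0) = F := by
    rw [hQ, sub_mul, geom_sum₂_mul, hF, ht]; simp; ring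
  have hQm : Q.Monic := (monic_X_sub_C y0).of_mul_monic_right (by rw [hQF]; exact hFm)
  have hQev : ∀ z, Q.eval z * (z - y0) = F.eval z := by
    intro z; rw [← hQF]; simp
  have hQy0 : Q.eval y0 = ((N + 2 : ℕ) : PowerSeries K) * y0 ^ (N + 1) - 1 := by
    rw [hQ, eval_sub, eval_finsetSum, eval_one]
    congr 1
    rw [Finset.sum_congr rfl (g := fun _ => y0 ^ (N + 1)), Finset.sum_const, Finset.card_range,
      nsmul_eq_mul]
    intro i hi
    rw [Finset.mem_range] at hi
    simp only [eval_mul, eval_pow, eval_X, eval_C]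
    rw [← pow_add]; congr 1; omega
  have hQ' : ∀ z, PowerSeries.constantCoeff z = c →
      PowerSeries.constantCoeff (Q.derivative.eval z) ≠ 0 := by
    intro z hz h0
    have h3 : PowerSeries.constantCoeff (Q.derivative.eval z) =
        (∑ i ∈ Finset.range (N + 2), (i : K)) * c ^ N := by
      rw [hQ, derivative_sub, derivative_sum, eval_sub, eval_finsetSum, map_sub, map_sum,
        Finset.sum_mul]
      simp only [derivative_one, eval_zero, map_zero, sub_zero]
      refine Finset.sum_congr rfl fun i hi => ?_
      rw [Finset.mem_range] at hi
      rw [← C_pow, derivative_mul, derivative_C, mul_zero, add_zero, derivative_X_pow]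
      simp only [eval_mul, eval_pow, eval_X, eval_C, map_mul, map_pow, hz, hcy0, map_natCast,
        eval_natCast]
      rcases i with _ | i
      · simp
      · rw [mul_assoc, ← pow_add, show i + 1 - 1 + (N + 2 - 1 - (i + 1)) = N by omega]
    have h4 : (∑ i ∈ Finset.range (N + 2), (i : K)) * 2 = ((N + 2 : ℕ) : K) * ((N + 1 : ℕ) : K) := by
      have := Finset.sum_range_id_mul_two (N + 2)
      have := congrArg (Nat.cast : ℕ → K) this
      push_cast at this ⊢
      rw [this]
    rw [h3, mul_eq_zero] at h0
    rcases h0 with h0 | h0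
    · rw [h0, zero_mul] at h4
      exact mul_ne_zero hnK hn1 h4.symm
    · exact pow_ne_zero N hc0 h0
  obtain ⟨y1, hy1Q, hy1c⟩ := hensel_ps Q hQm y0
    (by rw [hQy0, map_sub, map_mul, map_pow, hcy0, map_natCast, hc, map_one, sub_self])
    (hQ' y0 hcy0)
  rw [hcy0] at hy1c
  have hy1F : F.eval y1 = 0 := by rw [← hQev, hy1Q, zero_mul]
  have hy0F : F.eval y0 = 0 := by rw [hFev, ht, sub_self]
  have hy10 : y0 ≠ y1 := by
    intro h
    rw [← h, hQy0] at hy1Q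
    have h3 := aeval_C_add_X_eq_zero c (C ((N + 2 : ℕ) : K) * X ^ (N + 1) - 1) (by
      rw [← hy0, map_sub, map_mul, aeval_C, map_pow, aeval_X, map_one, map_natCast]
      exact hy1Q)
    have := congrArg (fun q => coeff q 0) h3
    simp at this
  -- the substitution `X ↦ y1 - c`
  set φ : PowerSeries K := y1 - PowerSeries.C c with hφ
  have hφc : PowerSeries.constantCoeff φ = 0 := by simp [hφ, hy1c]
  have hφ0 : φ ≠ 0 := by
    intro h
    have h3 : y1 = PowerSeries.C c := sub_eq_zero.1 h
    have h4 : y0 ^ (N + 2) - y0 - PowerSeries.C (c ^ (N + 2) - c) = 0 := by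
      have := hy1F
      rw [hFev, h3, ht] at this
      rw [map_sub, map_pow]; linear_combination -this
    have h5 := aeval_C_add_X_eq_zero c (X ^ (N + 2) - X - C (c ^ (N + 2) - c)) (by
      rw [← hy0]
      simp only [map_sub, map_pow, aeval_X, aeval_C] at h4 ⊢
      exact h4)
    have := congrArg (fun q => coeff q 1) h5
    simp only [coeff_sub, coeff_X_pow, coeff_C, coeff_X_one, coeff_zero, one_ne_zero, if_false,
      if_neg (show 1 ≠ N + 2 by omega)] at this
    simp at this
  have hsub : PowerSeries.HasSubst φ := PowerSeries.HasSubst.of_constantCoeff_zero' hφc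
  let θ : PowerSeries K →ₐ[K] PowerSeries K := PowerSeries.substAlgHom hsub
  have hθX : θ PowerSeries.X = φ := PowerSeries.substAlgHom_X hsub
  have hθC : ∀ a, θ (PowerSeries.C a) = PowerSeries.C a := fun a => θ.commutes a
  have hθcc : ∀ g, PowerSeries.constantCoeff (θ g) = PowerSeries.constantCoeff g := by
    intro g
    obtain ⟨h, hh⟩ := PowerSeries.X_dvd_iff.2
      (show PowerSeries.constantCoeff (g - PowerSeries.C (PowerSeries.constantCoeff g)) = 0 by simp)
    rw [sub_eq_iff_eq_add] at hh
    conv_lhs => rw [hh]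
    rw [map_add, map_mul, hθX, hθC]
    simp [hφc]
  have hθinj : ∀ g, θ g = 0 → g = 0 := by
    intro g hg
    have hdvd : ∀ k, PowerSeries.X ^ k ∣ g := by
      intro k
      induction k with
      | zero => simp
      | succ k ih =>
        obtain ⟨h, rfl⟩ := ih
        rw [map_mul, map_pow, hθX] at hg
        have h3 := (mul_eq_zero.1 hg).resolve_left (pow_ne_zero _ hφ0)
        rw [pow_succ]
        refine mul_dvd_mul_left _ (PowerSeries.X_dvd_iff.2 ?_)
        rw [← hθcc, h3, map_zero]
    ext m
    exact PowerSeries.X_pow_dvd_iff.1 (hdvd (m + 1)) m (by omega)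
  have hθy0 : θ y0 = y1 := by rw [hy0, map_add, hθX, hθC, hφ]; ring
  have hθt : θ t = t := by
    rw [ht, map_sub, map_pow, hθy0]
    have := hy1F
    rw [hFev] at this
    exact sub_eq_zero.1 this
  have hθF : ∀ z, F.eval z = 0 → F.eval (θ z) = 0 := by
    intro z hz
    rw [hFev] at hz ⊢
    have := congrArg θ hz
    rwa [map_sub, map_sub, map_pow, hθt, map_zero] at this
  have hθy1 : θ y1 = y0 := by
    by_contra hne
    have h3 := hθF y1 hy1F
    rw [← hQev] at h3
    have h4 := (mul_eq_zero.1 h3).resolve_right (sub_ne_zero.2 hne)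
    have h5 : θ y1 = y1 := (hensel_unique Q hy1Q h4 (hθcc y1).symm (hQ' y1 hy1c)).symm
    refine hy10 (sub_eq_zero.1 (hθinj _ ?_))
    rw [map_sub, hθy0, h5, sub_self]
  have hθη : ∀ k, θ (η k) = η k := by
    intro k
    refine (hensel_unique F (hη k) (hθF _ (hη k)) (hθcc _).symm ?_).symm
    rw [hFev', map_sub, map_mul, map_pow, map_natCast, map_one, hηβ]
    exact (hβc k).2.2
  refine ⟨c, Fin.cons y0 (Fin.cons y1 η), ?_, rfl, ?_, ?_⟩
  · rw [Fin.cons_injective_iff, Fin.cons_injective_iff]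
    refine ⟨?_, ?_, fun a b hab => hβ (by rw [← hηβ, ← hηβ, hab])⟩
    · rintro ⟨k, hk⟩
      refine Fin.cases (fun h => hy10 h.symm) (fun k h => (hβc k).1 ?_) k hk
      rw [← hηβ, ← hcy0, ← h]; rfl
    · rintro ⟨k, hk⟩
      exact (hβc k).1 (by rw [← hηβ, hk, hy1c])
  · have key : ∀ z, F.eval z = 0 → z ^ (N + 2) - z = y0 ^ (N + 2) - y0 := by
      intro z hz
      rw [hFev] at hz
      exact sub_eq_zero.1 hz
    intro k
    refine Fin.cases rfl (fun k => ?_) k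
    refine Fin.cases (key _ hy1F) (fun k => key _ (hη k)) k
  · intro g hg
    have hcomp : (Fin.cons y0 (Fin.cons y1 η) : Fin (N + 2) → PowerSeries K) ∘
        Equiv.swap 0 1 = fun k => θ ((Fin.cons y0 (Fin.cons y1 η) : Fin (N + 2) → _) k) := by
      funext k
      refine Fin.cases ?_ (fun k => ?_) k
      · simp [hθy0]
      · refine Fin.cases ?_ (fun k => ?_) k
        · simp [hθy1]
        · rw [Function.comp_apply, Equiv.swap_apply_of_ne_of_ne (Fin.succ_ne_zero _)]
          · exact (hθη k).symm
          · rw [← Fin.succ_zero_eq_one, Ne, Fin.succ_inj]; exact Fin.succ_ne_zero _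
    rw [hcomp]
    have := congrArg θ hg
    rw [map_zero, ← AlgHom.comp_apply, MvPolynomial.comp_aeval] at this
    exact this

end Series

/-! ### Existence of a generic point -/

section
variable {K : Type*} [Field K]

/-- All transpositions preserve the relations: they are conjugates of `(0 1)` under the permutations
given by `two_trans`. -/
lemma relPerm_swap [IsAlgClosed K] (N : ℕ) (hnK : ((N + 2 : ℕ) : K) ≠ 0)
    (c : K) (y : Fin (N + 2) → PowerSeries K) (hinj : Function.Injective y)
    (hy0 : y 0 = PowerSeries.C c + PowerSeries.X)
    (hroot : ∀ k, y k ^ (N + 2) - y k = y 0 ^ (N + 2) - y 0)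
    (hswap : RelPerm K y (Equiv.swap 0 1)) {a b : Fin (N + 2)} (hab : a ≠ b) :
    RelPerm K y (Equiv.swap a b) := by
  let Ω := AlgebraicClosure (FractionRing (PowerSeries K))
  have hι : Function.Injective (algebraMap (PowerSeries K) Ω) := by
    rw [IsScalarTower.algebraMap_eq (PowerSeries K) (FractionRing (PowerSeries K)) Ω]
    exact (algebraMap (FractionRing (PowerSeries K)) Ω).injective.comp
      (IsFractionRing.injective _ _)
  let Y : Fin (N + 2) → Ω := fun k => algebraMap (PowerSeries K) Ω (y k)
  have htower : ∀ x : K, algebraMap (PowerSeries K) Ω (PowerSeries.C x) = algebraMap K Ω x :=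
    fun x => (IsScalarTower.algebraMap_apply K (PowerSeries K) Ω x).symm
  have htr : ∀ k, Transcendental K (Y k) := by
    intro k hk
    obtain ⟨x, hx⟩ := isIntegral_mem_range hk.isIntegral
    have hyk : y k = PowerSeries.C x := hι (by rw [htower, hx])
    have h4 := hroot k
    rw [hyk, hy0] at h4
    have h5 := aeval_C_add_X_eq_zero c (X ^ (N + 2) - X - C (x ^ (N + 2) - x)) (by
      simp only [map_sub, map_pow, aeval_X, aeval_C]
      exact sub_eq_zero.2 h4.symm)
    have := congrArg (fun q => coeff q 1) h5
    simp only [coeff_sub, coeff_X_pow, coeff_C, coeff_X_one, coeff_zero, one_ne_zero, if_false,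
      if_neg (show 1 ≠ N + 2 by omega)] at this
    simp at this
  obtain ⟨π, hπ0, hπ1, hπ⟩ := two_trans (K := K) (by omega : 2 ≤ N + 2) hnK Y (hι.comp hinj)
    (fun i j => by
      simp only [Y, ← map_pow, ← map_sub]
      rw [hroot i, hroot j]) htr (a₀ := 0) (b₀ := 1) (a := a) (b := b)
      (by simp) hab
  have hπy : RelPerm K y π := by
    intro g hg
    have h1 : ∀ z : Fin (N + 2) → PowerSeries K,
        MvPolynomial.aeval (fun k => algebraMap (PowerSeries K) Ω (z k)) g =
          algebraMap (PowerSeries K) Ω (MvPolynomial.aeval z g) := fun z =>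
      MvPolynomial.aeval_algebraMap_apply _ _ _
    have h2 := hπ g (by rw [h1, hg, map_zero])
    have h3 := (h1 (y ∘ π)).symm.trans h2
    exact (map_eq_zero_iff _ hι).1 h3
  have := (hπy.mul hswap).mul hπy.inv
  rwa [Equiv.mul_swap_eq_swap_mul, hπ0, hπ1, mul_inv_cancel_right] at this

lemma exists_genPt [IsAlgClosed K] {n : ℕ} (hn : 2 ≤ n) (hnK : (n : K) ≠ 0)
    (hn1 : ((n - 1 : ℕ) : K) ≠ 0) (h2 : (2 : K) ≠ 0) : Nonempty (GenPt K n) := by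
  obtain ⟨N, rfl⟩ : ∃ N, n = N + 2 := ⟨n - 2, by omega⟩
  obtain ⟨c, y, hinj, hy0, hroot, hswap⟩ := exists_series_roots N hnK hn1 h2
  let z : ℕ → PowerSeries K := fun k => if h : k < N + 2 then y ⟨k, h⟩ else 0
  have hz : ∀ k (h : k < N + 2), z k = y ⟨k, h⟩ := fun k h => dif_pos h
  refine ⟨⟨z, c, ?_, ?_, ?_, ?_⟩⟩
  · intro a ha b hb hab
    rw [hz a ha, hz b hb] at hab
    exact congrArg Fin.val (hinj hab)
  · rw [hz 0 (by omega)]; exact hy0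
  · intro k hk
    rw [hz k hk, hz 0 (by omega)]; exact hroot _
  · intro a ha b hb g hg hg0
    by_cases hab : a = b
    · subst hab
      simpa using hg0
    obtain ⟨q, rfl⟩ := MvPolynomial.exists_rename_eq_of_vars_subset_range g
      (Fin.val : Fin (N + 2) → ℕ) Fin.val_injective (by
        rw [Fin.range_val]; exact hg)
    rw [MvPolynomial.aeval_rename] at hg0 ⊢
    have e1 : z ∘ (Fin.val : Fin (N + 2) → ℕ) = y := by
      funext k; exact hz _ k.2
    have e2 : (fun k => z (Equiv.swap a b k)) ∘ (Fin.val : Fin (N + 2) → ℕ) =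
        y ∘ Equiv.swap ⟨a, ha⟩ ⟨b, hb⟩ := by
      funext k
      rw [← e1]
      simp only [Function.comp_apply]
      congr 1
      simp only [Equiv.swap_apply_def, Fin.ext_iff]
      split_ifs <;> rfl
    rw [e1] at hg0
    rw [e2]
    exact relPerm_swap N hnK c y hinj hy0 hroot hswap
      (by simpa [Fin.ext_iff] using hab) q hg0

end

/-! ### Numerical estimates -/

lemma rk_succ (n e : ℕ) : rk n (e + 1) = rk n e * (n - (e + 1)) := by
  simp [rk, Fin.prod_univ_castSucc]

lemma rk_mul_factorial (n e : ℕ) (he : e + 1 ≤ n) :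
    rk n e * (n - 1 - e).factorial = (n - 1).factorial := by
  induction e with
  | zero => simp [rk]
  | succ e ih =>
    rw [← ih (by omega), rk_succ, mul_assoc]
    congr 1
    rw [show n - 1 - e = (n - 1 - (e + 1)) + 1 by omega, Nat.factorial_succ]
    congr 1
    omega

lemma rk_le (n e : ℕ) (he : e + 1 ≤ n) : rk n e ≤ (n - 1).factorial :=
  Nat.le_of_dvd (Nat.factorial_pos _) ⟨_, (rk_mul_factorial n e he).symm⟩

lemma two_le_rk (n e : ℕ) (h3 : 3 ≤ n) (he1 : 1 ≤ e) (he : e + 2 ≤ n) : 2 ≤ rk n e := by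
  induction e with
  | zero => omega
  | succ e ih =>
    rw [rk_succ]
    rcases Nat.eq_zero_or_pos e with rfl | h
    · simp [rk]; omega
    · have := ih h (by omega)
      have h4 : 1 ≤ n - (e + 1) := by omega
      nlinarith

lemma sum_rk_le (n m : ℕ) (hm : m + 2 ≤ n) : ∑ e ∈ Finset.Icc 1 m, rk n e ≤ 2 * rk n m := by
  induction m with
  | zero => simp
  | succ m ih =>
    rw [Finset.sum_Icc_succ_top (by omega)]
    have h1 := ih (by omega)
    have h2 : 2 * rk n m ≤ rk n (m + 1) := by
      rw [rk_succ, mul_comm]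
      exact Nat.mul_le_mul_left _ (by omega)
    omega

lemma sum_rk_le_factorial (n : ℕ) (hn : 2 ≤ n) :
    ∑ e ∈ Finset.Icc 1 (n - 2), rk n e ≤ 2 * (n - 1).factorial := by
  refine (sum_rk_le n (n - 2) (by omega)).trans (Nat.mul_le_mul_left _ (rk_le n _ (by omega)))

/-- The inequality `hcount` of `GenPt.stepanov`, for multiplicity `M = r k` and degree `b = k + δ`. -/
lemma count_num (a b δ E r k M : ℕ) (hM : M = r * k) (hr : 0 < r)
    (hE : E ≤ 2 * δ) (hb : b = k + δ)
    (h : k * (k + 3 * δ) + δ * k * M < (a + 1) * (δ + 1) + δ * k) :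
    ∑ m ∈ Finset.range M, r * (a + δ + (b + δ) + m * E + 1) < r * (a + 1) * (r * (b + 1)) := by
  have h1 : ∑ m ∈ Finset.range M, r * (a + δ + (b + δ) + m * E + 1) ≤
      r * (M * (a + δ + (b + δ) + 1) + (∑ m ∈ Finset.range M, m) * (2 * δ)) := by
    rw [← Finset.mul_sum, Finset.sum_mul]
    refine Nat.mul_le_mul_left _ ?_
    have : ∀ m ∈ Finset.range M, a + δ + (b + δ) + m * E + 1 ≤
        (a + δ + (b + δ) + 1) + m * (2 * δ) := by
      intro m _
      have := Nat.mul_le_mul_left m hE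
      omega
    refine (Finset.sum_le_sum this).trans ?_
    rw [Finset.sum_add_distrib, Finset.sum_const, Finset.card_range, smul_eq_mul]
  refine h1.trans_lt ?_
  rw [mul_assoc r (a + 1)]
  refine Nat.mul_lt_mul_of_pos_left ?_ hr
  have h2 := Finset.sum_range_id_mul_two M
  rw [show (∑ m ∈ Finset.range M, m) * (2 * δ) = (∑ m ∈ Finset.range M, m) * 2 * δ by ring, h2]
  subst hb
  rcases Nat.eq_zero_or_pos M with h0 | h0
  · rw [h0]; simp; omega
  obtain ⟨M', rfl⟩ : ∃ M', M = M' + 1 := ⟨M - 1, by omega⟩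
  rw [Nat.add_sub_cancel]
  have h5 : k * (k + 3 * δ) + δ * k * M' < (a + 1) * (δ + 1) := by nlinarith
  have h6 := Nat.mul_lt_mul_of_pos_left h5 hr
  have : (M' + 1) * (a + δ + (k + δ + δ) + 1) + (M' + 1) * M' * δ =
      r * (k * (k + 3 * δ) + δ * k * M') + r * k * (a + 1) := by
    rw [hM]; ring
  rw [this]
  calc _ < r * ((a + 1) * (δ + 1)) + r * k * (a + 1) := by omega
    _ = (a + 1) * (r * (k + δ + 1)) := by ring

/-- The choice of parameters in `GenPt.stepanov`: here `F` stands for `(n - 1)!`, `r` for `rk n e`,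
`δ` for `(n - 1) (n - 2) / 2` and `w` for `⌊√p⌋`. -/
lemma num_main (n F r δ w p k a : ℕ) (h3 : 3 ≤ n) (hF : 1 ≤ F) (hr2 : 2 ≤ r) (hrF : r ≤ F)
    (hδ : 2 * δ ≤ (n - 1) * (n - 2)) (hw : 2 * n * n * F ≤ w) (hwp : w * w ≤ p)
    (hk : k = w / r) (ha : a = (p - 1) / r - 2 * δ) :
    2 * δ ≤ (p - 1) / r ∧
      k * (k + 3 * δ) + δ * k * (r * k) < (a + 1) * (δ + 1) + δ * k := by
  obtain ⟨m, rfl⟩ : ∃ m, n = m + 3 := ⟨n - 3, by omega⟩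
  have hδ1 : 2 * δ ≤ (m + 2) * (m + 1) := hδ
  have hδn : 2 * (δ + 1) ≤ (m + 3) * (m + 3) := by nlinarith
  have hwF : 4 * (δ + 1) * F ≤ w := by
    calc 4 * (δ + 1) * F = 2 * (2 * (δ + 1)) * F := by ring
      _ ≤ 2 * ((m + 3) * (m + 3)) * F := by gcongr
      _ = 2 * (m + 3) * (m + 3) * F := by ring
      _ ≤ w := hw
  have hwδ : 4 * (δ + 1) ≤ w := le_trans (Nat.le_mul_of_pos_right _ hF) hwF
  have hwr : 4 * (δ + 1) * r ≤ w := le_trans (by gcongr) hwF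
  -- `p` dominates the lower order terms
  have hw1 : 8 * (δ + 1) ≤ w := by
    have := Nat.mul_le_mul_left (4 * (δ + 1)) hr2
    omega
  have hA : 2 * (4 * δ * w) ≤ p := by
    have : (8 * δ) * w ≤ w * w := Nat.mul_le_mul_right _ (by omega)
    linarith
  have hB : 2 * (4 * δ * (δ + 1) * r) < p := by
    have : 8 * (δ + 1) * (4 * (δ + 1) * r) ≤ w * w := Nat.mul_le_mul hw1 hwr
    have h5 : 0 < (δ + 1) * r := by positivity
    have h6 : 0 < (δ + 1) * ((δ + 1) * r) := by positivity
    have h7 : 0 ≤ (δ + 1) * r := h5.le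
    nlinarith only [this, hwp, h5, h6]
  have hp1 : 2 * δ * r + 1 ≤ p := by
    have := Nat.le_mul_self w
    have h5 : 4 * (δ + 1) * r = 2 * δ * r + 2 * δ * r + 4 * r := by ring
    omega
  have h2 : 2 * δ ≤ (p - 1) / r := by
    rw [Nat.le_div_iff_mul_le (by omega)]; omega
  refine ⟨h2, ?_⟩
  have ha1 : p ≤ r * (a + 1 + 2 * δ) := by
    have := Nat.lt_mul_div_succ (p - 1) (show 0 < r by omega)
    have h4 : a + 1 + 2 * δ = (p - 1) / r + 1 := by omega
    rw [h4]; omega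
  have hkw : r * k ≤ w := by rw [hk]; exact Nat.mul_div_le w r
  have hrkp : (r * k) * (r * k) ≤ p := (Nat.mul_le_mul hkw hkw).trans hwp
  -- multiply by `2 * r`
  have hr0 : 0 < 2 * r := by omega
  refine Nat.lt_of_mul_lt_mul_left (a := 2 * r) ?_
  have e1 : 2 * r * (k * (k + 3 * δ) + δ * k * (r * k)) =
      2 * (r * k) * k + 6 * δ * (r * k) + 2 * δ * ((r * k) * (r * k)) := by ring
  have e2 : 2 * r * ((a + 1) * (δ + 1) + δ * k) + 4 * δ * (δ + 1) * r =
      2 * (δ + 1) * (r * (a + 1 + 2 * δ)) + 2 * δ * (r * k) := by ring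
  have e3 : 2 * (r * k) * k ≤ p := by
    refine le_trans ?_ hrkp
    have := Nat.mul_le_mul_right (r * k * k) hr2
    calc 2 * (r * k) * k = 2 * (r * k * k) := by ring
      _ ≤ r * (r * k * k) := this
      _ = r * k * (r * k) := by ring
  have e4 : 2 * (δ + 1) * p ≤ 2 * (δ + 1) * (r * (a + 1 + 2 * δ)) := Nat.mul_le_mul_left _ ha1
  have e5 : 2 * δ * ((r * k) * (r * k)) ≤ 2 * δ * p := Nat.mul_le_mul_left _ hrkp
  have e6 : 4 * δ * (r * k) ≤ 4 * δ * w := Nat.mul_le_mul_left _ hkw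
  linarith

/-- The Stepanov bound with optimised parameters, of the form `|A| ≤ p + O(√p)`. -/
lemma GenPt.card_bound {K : Type*} [Field K] {n e : ℕ} (G : GenPt K n) (p : ℕ) [Fact p.Prime]
    [CharP K p] (h3 : 3 ≤ n) (he1 : 1 ≤ e) (he : e + 2 ≤ n)
    (hp : (2 * n * n.factorial) ^ 2 ≤ p) (A : Finset K)
    (hper : ∀ α ∈ A, α ^ p ^ (e + 1) = α)
    (hinj : ∀ α ∈ A, ∀ i < e + 1, ∀ j < e + 1, α ^ p ^ i = α ^ p ^ j → i = j)
    (hf : ∀ α ∈ A, (α ^ n - α) ^ p = α ^ n - α)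
    (hf' : ∀ α ∈ A, (n : K) * α ^ (n - 1) - 1 ≠ 0) :
    ((A.card : ℤ) - p) * ((Nat.sqrt p : ℤ) - (n - 1).factorial) ≤
      p * (1 + (rk n e : ℤ) * ((n - 1) * (n - 2))) := by
  set δ := (n - 1) * (n - 2) / 2 with hδ
  set r := rk n e with hr
  set w := Nat.sqrt p with hw
  set F := (n - 1).factorial with hF
  have hF1 : 1 ≤ F := Nat.factorial_pos _
  have hr2 : 2 ≤ r := two_le_rk n e h3 he1 he
  have hrF : r ≤ F := rk_le n e (by omega)
  have h2δ : 2 * δ = (n - 1) * (n - 2) := by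
    rw [hδ]; refine Nat.mul_div_cancel' ?_
    have := (Nat.even_mul_succ_self (n - 2)).two_dvd
    rwa [show n - 2 + 1 = n - 1 by omega, mul_comm] at this
  have hwp : w * w ≤ p := Nat.sqrt_le p
  have hwF : 2 * n * n * F ≤ w := by
    rw [hw, Nat.le_sqrt, ← pow_two]
    refine le_trans (le_of_eq ?_) hp
    rw [← Nat.mul_factorial_pred (show n ≠ 0 by omega), ← hF, mul_assoc (2 * n) n F]
  obtain ⟨h2, h4⟩ := num_main n F r δ w p (w / r) ((p - 1) / r - 2 * δ) h3 hF1 hr2 hrF h2δ.le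
    hwF hwp rfl rfl
  set k := w / r with hk
  set a := (p - 1) / r - 2 * δ with ha
  have hkw : r * k ≤ w := Nat.mul_div_le w r
  have hwp' : w ≤ p := Nat.sqrt_le_self p
  have hpp : 0 < p := (Fact.out : p.Prime).pos
  have h5 := G.stepanov p (by omega) (show e + 1 ≤ n by omega) a (k + δ) (r * k)
    (hkw.trans hwp')
    (by
      rw [← hδ, ← hr]
      have h6 : a + δ + δ = (p - 1) / r := by omega
      rw [h6]
      have := Nat.mul_div_le (p - 1) r
      omega)
    (by
      rw [← hδ, ← hr]
      refine count_num a (k + δ) δ (e * (n - 1)) r k (r * k) rfl (by omega) ?_ rfl h4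
      rw [h2δ, mul_comm]
      exact Nat.mul_le_mul_left _ (by omega))
    A hper hinj hf hf'
  rw [← hδ, ← hr] at h5
  have h6 : r * (a + δ + p * (k + δ + δ) + δ) ≤ p + r * k * p + p * (r * (2 * δ)) := by
    have h7 : a + δ + p * (k + δ + δ) + δ = (p - 1) / r + p * (k + 2 * δ) := by
      have : k + δ + δ = k + 2 * δ := by ring
      rw [this]; omega
    rw [h7]
    have := Nat.mul_div_le (p - 1) r
    calc _ = r * ((p - 1) / r) + r * (p * (k + 2 * δ)) := by ring
      _ ≤ p + r * (p * (k + 2 * δ)) := by omega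
      _ = _ := by ring
  have h8 : (A.card : ℤ) * (r * k) ≤ p + r * k * p + p * (r * (2 * δ)) := by
    exact_mod_cast h5.trans h6
  have h2δ' : (2 * δ : ℤ) = ((n : ℤ) - 1) * (n - 2) := by
    have : ((2 * δ : ℕ) : ℤ) = (((n - 1) * (n - 2) : ℕ) : ℤ) := by rw [h2δ]
    push_cast [Nat.cast_sub (show 1 ≤ n by omega), Nat.cast_sub (show 2 ≤ n by omega)] at this
    exact this
  rw [h2δ'] at h8
  have h9 : (w : ℤ) - F ≤ r * k := by
    have := Nat.lt_mul_div_succ w (show 0 < r by omega)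
    rw [← hk] at this
    have h10 : w ≤ r * k + F := by
      have : r * (k + 1) = r * k + r := by ring
      omega
    have : (w : ℤ) ≤ r * k + F := by exact_mod_cast h10
    linarith
  have hwF0 : (0 : ℤ) ≤ (w : ℤ) - F := by
    have : F ≤ w := (Nat.le_mul_of_pos_left F (by positivity)).trans hwF
    have : (F : ℤ) ≤ w := by exact_mod_cast this
    linarith
  have hpos : (0 : ℤ) ≤ p * (1 + (r : ℤ) * ((n - 1) * (n - 2))) := by
    rw [← h2δ']; positivity
  rcases le_or_gt ((A.card : ℤ) - p) 0 with hneg | hneg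
  · exact (mul_nonpos_of_nonpos_of_nonneg hneg hwF0).trans hpos
  · have := mul_le_mul_of_nonneg_left h9 hneg.le
    linarith

/-- The bounds for the orbit lengths `2, …, n - 1`, together with `p` for length `1`, are incompatible
with `n (p - n + 1)` roots. -/
lemma num_final (n p : ℕ) (h3 : 3 ≤ n) (hp : (2 * n * n.factorial) ^ 2 ≤ p) (c : ℕ → ℕ)
    (h : ∀ e ∈ Finset.Icc 1 (n - 2),
      ((c e : ℤ) - p) * ((Nat.sqrt p : ℤ) - (n - 1).factorial) ≤
      p * (1 + (rk n e : ℤ) * ((n - 1) * (n - 2))))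
    (hc : (n : ℤ) * ((p : ℤ) - (n - 1)) ≤ p + ∑ e ∈ Finset.Icc 1 (n - 2), (c e : ℤ)) : False := by
  have hs := Finset.sum_le_sum h
  rw [← Finset.sum_mul, Finset.sum_sub_distrib, ← Finset.mul_sum, Finset.sum_add_distrib,
    ← Finset.sum_mul, Finset.sum_const, Finset.sum_const, Nat.card_Icc] at hs
  have hr : (∑ e ∈ Finset.Icc 1 (n - 2), (rk n e : ℤ)) ≤ 2 * ((n - 1).factorial : ℤ) := by
    exact_mod_cast sum_rk_le_factorial n (by omega)
  set S := ∑ e ∈ Finset.Icc 1 (n - 2), (rk n e : ℤ)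
  set T := ∑ e ∈ Finset.Icc 1 (n - 2), (c e : ℤ)
  set F := (n - 1).factorial with hF
  set w := Nat.sqrt p with hw
  have hwF : 2 * n * n * F ≤ w := by
    rw [hw, Nat.le_sqrt, ← pow_two]
    refine le_trans (le_of_eq ?_) hp
    rw [← Nat.mul_factorial_pred (show n ≠ 0 by omega), ← hF, mul_assoc (2 * n) n F]
  have hwp : w * w ≤ p := Nat.sqrt_le p
  have hF1 : 1 ≤ F := Nat.factorial_pos _
  rw [show n - 2 + 1 - 1 = n - 2 by omega] at hs
  obtain ⟨m, rfl⟩ : ∃ m, n = m + 3 := ⟨n - 3, by omega⟩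
  rw [show m + 3 - 2 = m + 1 by omega] at hs
  simp only [nsmul_eq_mul] at hs
  push_cast at hs hc
  zify at hwF hwp hF1
  have hm : (0 : ℤ) ≤ m := by positivity
  generalize (m : ℤ) = m at *
  generalize (F : ℤ) = F at *
  generalize (w : ℤ) = w at *
  generalize (p : ℤ) = p at *
  have hwF' : 0 ≤ w - F := by nlinarith [mul_nonneg hm (by linarith : 0 ≤ F), mul_nonneg hm hm]
  have hw0 : 1 ≤ w := by linarith
  have hp0 : 1 ≤ p := by nlinarith
  -- lower bound for the left side
  have h1 : (p - (m + 3) * (m + 2)) * (w - F) ≤ (T - (m + 1) * p) * (w - F) := by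
    refine mul_le_mul_of_nonneg_right ?_ hwF'
    linarith
  have h2 : (m + 3) * (m + 2) * (w - F) ≤ p := by
    have : (m + 3) * (m + 2) ≤ w := by nlinarith [mul_nonneg hm hm]
    calc _ ≤ w * w := mul_le_mul this (by linarith) hwF' (by linarith)
      _ ≤ p := hwp
  have h4 : (m + 1) + S * ((m + 2) * (m + 1)) ≤ (m + 1) + 2 * F * ((m + 2) * (m + 1)) := by
    have : 0 ≤ (m + 2) * (m + 1) := by positivity
    nlinarith
  have h5 : p * ((w - F) - 1) ≤ p * ((m + 1) + 2 * F * ((m + 2) * (m + 1))) := by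
    have h7 := mul_le_mul_of_nonneg_left h4 (by linarith : 0 ≤ p)
    ring_nf at hs h1 h2 h7 ⊢
    linarith
  have h6 := le_of_mul_le_mul_left h5 (by linarith)
  nlinarith [mul_nonneg hm (by linarith : 0 ≤ F - 1)]

/-! ### An irreducible trinomial over the prime field -/

section
variable (p : ℕ) [Fact p.Prime]

lemma aeval_pow_iterate {K : Type*} [Field K] [Algebra (ZMod p) K] (α : K) (q : (ZMod p)[X])
    (hq : aeval α q = 0) (j : ℕ) : aeval (α ^ p ^ j) q = 0 := by
  induction j with
  | zero => simpa using hq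
  | succ j ih =>
    rw [pow_succ, pow_mul, ← expand_aeval, ZMod.expand_card, map_pow, ih,
      zero_pow (Fact.out : p.Prime).ne_zero]

/-- The Frobenius orbit of a root of `q` is a cycle of length at most `deg q`. -/
lemma period_bound {K : Type*} [Field K] [Algebra (ZMod p) K] (α : K)
    (q : (ZMod p)[X]) (hq0 : q ≠ 0) (hq : aeval α q = 0) :
    ∃ i, 0 < i ∧ i ≤ q.natDegree ∧ α ^ p ^ i = α ∧
      ∀ j < i, ∀ l < i, α ^ p ^ j = α ^ p ^ l → j = l := by
  classical
  have : CharP K p := charP_of_injective_algebraMap (algebraMap (ZMod p) K).injective p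
  have hit : ∀ j, (frobenius K p)^[j] α = α ^ p ^ j := fun j => iterate_frobenius _ _ _
  have hroots : ∀ j, α ^ p ^ j ∈ q.rootSet K := fun j =>
    (mem_rootSet_of_ne hq0).2 (aeval_pow_iterate p α q hq j)
  have hper : ∃ d, 0 < d ∧ (frobenius K p)^[d] α = α := by
    obtain ⟨a, b, hab, h⟩ := Set.Finite.exists_lt_map_eq_of_forall_mem (t := q.rootSet K)
      (f := fun j : ℕ => α ^ p ^ j) hroots (rootSet_finite q K)
    refine ⟨b - a, by omega, ?_⟩
    refine Function.iterate_cancel (frobenius_inj K p) ?_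
    simp only [hit]
    exact h.symm
  obtain ⟨d, hd, hd'⟩ := hper
  have hpos : 0 < Function.minimalPeriod (frobenius K p) α :=
    Function.IsPeriodicPt.minimalPeriod_pos hd hd'
  have hinj : ∀ j < Function.minimalPeriod (frobenius K p) α,
      ∀ l < Function.minimalPeriod (frobenius K p) α, α ^ p ^ j = α ^ p ^ l → j = l := by
    intro j hj l hl hjl
    rw [← hit, ← hit] at hjl
    exact Function.iterate_injOn_Iio_minimalPeriod hj hl hjl
  refine ⟨Function.minimalPeriod (frobenius K p) α, hpos, ?_, ?_, hinj⟩
  · have h1 : (Finset.range (Function.minimalPeriod (frobenius K p) α)).card ≤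
        (q.aroots K).toFinset.card := by
      refine Finset.card_le_card_of_injOn (fun j => α ^ p ^ j) ?_ ?_
      · intro j _
        have := aeval_pow_iterate p α q hq j
        rw [Finset.mem_coe, Multiset.mem_toFinset, mem_aroots]
        exact ⟨hq0, this⟩
      · intro j hj l hl hjl
        rw [Finset.coe_range] at hj hl
        exact hinj j hj l hl hjl
    rw [Finset.card_range] at h1
    refine h1.trans ((Multiset.toFinset_card_le _).trans ((card_roots' _).trans ?_))
    exact natDegree_map_le
  · rw [← hit]; exact Function.iterate_minimalPeriod

theorem exists_irreducible_zmod {n : ℕ} (hn : 2 ≤ n) (hp : (2 * n * n.factorial) ^ 2 ≤ p) :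
    ∃ b : ZMod p, Irreducible (X ^ n - (X + C b) : (ZMod p)[X]) := by
  classical
  by_contra hirr
  push Not at hirr
  have hpn : 4 * n * n ≤ p := by
    refine le_trans ?_ hp
    have : 1 ≤ n.factorial := Nat.factorial_pos n
    have h2 : 2 * n ≤ 2 * n * n.factorial := Nat.le_mul_of_pos_right _ this
    calc 4 * n * n = (2 * n) * (2 * n) := by ring
      _ ≤ (2 * n * n.factorial) * (2 * n * n.factorial) := Nat.mul_le_mul h2 h2
      _ = _ := by ring
  have hpn' : n < p := by nlinarith
  let K := AlgebraicClosure (ZMod p)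
  have hchar : CharP K p := charP_of_injective_algebraMap (algebraMap (ZMod p) K).injective p
  have hcast : ∀ k, 0 < k → k < p → ((k : ℕ) : K) ≠ 0 := by
    intro k h1 h2 h0
    exact absurd (Nat.le_of_dvd h1 ((CharP.cast_eq_zero_iff K p k).1 h0)) (by omega)
  have hnK : (n : K) ≠ 0 := hcast n (by omega) hpn'
  obtain ⟨G⟩ := exists_genPt (K := K) hn hnK (hcast _ (by omega) (by omega))
    (by exact_mod_cast hcast 2 (by omega) (by omega))
  set P : ZMod p → (ZMod p)[X] := fun b => X ^ n - (X + C b) with hP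
  have hPm : ∀ b, (P b).Monic := fun b => monic_X_pow_sub (by
    rw [degree_X_add_C]; exact_mod_cast hn)
  have hPd : ∀ b, (P b).natDegree = n := fun b => by
    simp only [hP]
    rw [natDegree_sub_eq_left_of_natDegree_lt, natDegree_X_pow]
    rw [natDegree_X_add_C, natDegree_X_pow]; omega
  let ι := algebraMap (ZMod p) K
  let R : ZMod p → Finset K := fun b => ((P b).aroots K).toFinset
  have hPev : ∀ b (α : K), aeval α (P b) = α ^ n - (α + ι b) := fun b α => by
    simp only [hP, map_sub, map_add, map_pow, aeval_X, aeval_C, ι]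
  have hR : ∀ b α, α ∈ R b ↔ α ^ n - α = ι b := by
    intro b α
    rw [Multiset.mem_toFinset, mem_aroots, hPev]
    constructor
    · rintro ⟨_, h⟩; linear_combination h
    · intro h; exact ⟨(hPm b).ne_zero, by linear_combination h⟩
  let good : ZMod p → Prop := fun b => ∀ α ∈ R b, (n : K) * α ^ (n - 1) - 1 ≠ 0
  have hRcard : ∀ b, good b → (R b).card = n := by
    intro b hb
    have hnd : ((P b).aroots K).Nodup := by
      rw [Multiset.nodup_iff_count_le_one]
      intro α
      by_contra hlt
      push Not at hlt
      rw [aroots, count_roots, one_lt_rootMultiplicity_iff_isRoot ((hPm b).map _).ne_zero] at hlt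
      have hαR : α ∈ R b := by
        rw [Multiset.mem_toFinset, mem_aroots]
        exact ⟨(hPm b).ne_zero, by
          have := hlt.1
          rwa [IsRoot, eval_map_algebraMap] at this⟩
      refine hb α hαR ?_
      have := hlt.2
      rw [derivative_map, IsRoot, eval_map_algebraMap] at this
      simp only [hP, derivative_X_pow, derivative_add, derivative_X, derivative_C,
        add_zero, map_sub, map_mul, map_pow, map_one, aeval_X, map_natCast] at this
      exact this
    rw [Multiset.toFinset_card_of_nodup hnd, aroots,
      ← (IsAlgClosed.splits _).natDegree_eq_card_roots, natDegree_map, hPd]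
  -- a bad `b` is one of the at most `n - 1` critical values
  have hbad : (Finset.univ.filter fun b => ¬ good b).card ≤ n - 1 := by
    set D : K[X] := C (n : K) * X ^ (n - 1) - 1 with hD
    have hDd : D.natDegree ≤ n - 1 := by
      rw [hD, ← C_1]
      exact (natDegree_sub_C).le.trans (natDegree_C_mul_X_pow_le _ _)
    have hD0 : D ≠ 0 := by
      intro h
      have := congrArg (eval 0) h
      simp [hD, show n - 1 ≠ 0 by omega] at this
    have h1 : ((Finset.univ.filter fun b => ¬ good b).image ι).card ≤
        (D.roots.toFinset.image fun α => α ^ n - α).card := by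
      refine Finset.card_le_card fun x hx => ?_
      rw [Finset.mem_image] at hx
      obtain ⟨b, hb, rfl⟩ := hx
      have hb := (Finset.mem_filter.1 hb).2
      simp only [good] at hb
      push Not at hb
      obtain ⟨α, hα, hα0⟩ := hb
      refine Finset.mem_image.2 ⟨α, ?_, (hR b α).1 hα⟩
      rw [Multiset.mem_toFinset, mem_roots hD0, IsRoot, hD]
      simpa using hα0
    rw [Finset.card_image_of_injective _ ι.injective] at h1
    exact h1.trans (Finset.card_image_le.trans
      ((Multiset.toFinset_card_le _).trans ((card_roots' _).trans hDd)))
  set T : Finset K := (Finset.univ.filter good).biUnion R with hT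
  have hTcard : n * (p - (n - 1)) ≤ T.card := by
    rw [hT, Finset.card_biUnion, Finset.sum_congr rfl (g := fun _ => n), Finset.sum_const,
      smul_eq_mul, mul_comm]
    · have := Finset.card_filter_add_card_filter_not (s := (Finset.univ : Finset (ZMod p))) good
      rw [Finset.card_univ, ZMod.card] at this
      exact Nat.mul_le_mul_right _ (by omega)
    · intro b hb; exact hRcard b (Finset.mem_filter.1 hb).2
    · intro b _ b' _ hbb'
      rw [Function.onFun, Finset.disjoint_left]
      intro α hα hα'
      exact hbb' (ι.injective (((hR b α).1 hα).symm.trans ((hR b' α).1 hα')))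
  have hTf : ∀ α ∈ T, ∃ b, α ^ n - α = ι b ∧ (n : K) * α ^ (n - 1) - 1 ≠ 0 := by
    intro α hα
    obtain ⟨b, hb, hαb⟩ := Finset.mem_biUnion.1 hα
    exact ⟨b, (hR b α).1 hαb, (Finset.mem_filter.1 hb).2 α hαb⟩
  -- by reducibility the minimal polynomial of a root has degree less than `n`
  have hper : ∀ α : K, ∃ e, α ∈ T → e < n - 1 ∧ α ^ p ^ (e + 1) = α ∧
      ∀ j < e + 1, ∀ l < e + 1, α ^ p ^ j = α ^ p ^ l → j = l := by
    intro α
    by_cases hα : α ∈ T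
    swap
    · exact ⟨0, fun h => absurd h hα⟩
    obtain ⟨b, hb, -⟩ := hTf α hα
    have hroot : aeval α (P b) = 0 := by rw [hPev]; linear_combination hb
    have hint : IsIntegral (ZMod p) α := ⟨P b, hPm b, hroot⟩
    obtain ⟨i, hi0, hi, h1, h2⟩ := period_bound p α (minpoly (ZMod p) α) (minpoly.ne_zero hint)
      (minpoly.aeval _ _)
    have hdvd := minpoly.dvd _ _ hroot
    have hlt : (minpoly (ZMod p) α).natDegree < n := by
      by_contra hge
      push Not at hge
      have heq : minpoly (ZMod p) α = P b := by
        refine (eq_of_monic_of_dvd_of_natDegree_le (minpoly.monic hint) (hPm b) hdvd ?_).symm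
        rw [hPd]; exact hge
      exact hirr b (by
        have := minpoly.irreducible hint
        rwa [heq] at this)
    refine ⟨i - 1, fun _ => ⟨by omega, ?_, ?_⟩⟩
    · rw [Nat.sub_add_cancel hi0]; exact h1
    · rw [Nat.sub_add_cancel hi0]; exact h2
  choose per hper using hper
  set A : ℕ → Finset K := fun e => T.filter fun α => per α = e with hA
  have hsum : T.card = ∑ e ∈ Finset.range (n - 1), (A e).card :=
    Finset.card_eq_sum_card_fiberwise fun α hα => by
      rw [Finset.coe_range]; exact (hper α hα).1
  have hA0 : (A 0).card ≤ p := by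
    have hX0 : (X ^ p - X : K[X]) ≠ 0 :=
      FiniteField.X_pow_card_sub_X_ne_zero K (Fact.out : p.Prime).one_lt
    have h1 : A 0 ⊆ (X ^ p - X : K[X]).roots.toFinset := by
      intro α hα
      obtain ⟨hαT, hα0⟩ := Finset.mem_filter.1 hα
      have := (hper α hαT).2.1
      rw [hα0, zero_add, pow_one] at this
      rw [Multiset.mem_toFinset, mem_roots hX0, IsRoot]
      simp [this]
    refine (Finset.card_le_card h1).trans ((Multiset.toFinset_card_le _).trans
      ((card_roots' _).trans ?_))
    rw [FiniteField.X_pow_card_sub_X_natDegree_eq K (Fact.out : p.Prime).one_lt]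
  have hrange : Finset.range (n - 1) = insert 0 (Finset.Icc 1 (n - 2)) := by
    ext x; simp only [Finset.mem_range, Finset.mem_insert, Finset.mem_Icc]; omega
  rw [hrange, Finset.sum_insert (by simp)] at hsum
  have htot : n * (p - (n - 1)) ≤ p + ∑ e ∈ Finset.Icc 1 (n - 2), (A e).card := by omega
  rcases Nat.eq_or_lt_of_le hn with rfl | h3
  · simp at htot
    omega
  · refine num_final n p h3 hp (fun e => (A e).card) (fun e he => ?_) ?_
    · rw [Finset.mem_Icc] at he
      have hmem : ∀ α ∈ A e, α ∈ T ∧ per α = e := fun α hα => Finset.mem_filter.1 hα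
      refine G.card_bound p h3 he.1 (by omega) hp (A e) ?_ ?_ ?_ ?_
      · intro α hα
        obtain ⟨h1, rfl⟩ := hmem α hα
        exact (hper α h1).2.1
      · intro α hα
        obtain ⟨h1, rfl⟩ := hmem α hα
        exact (hper α h1).2.2
      · intro α hα
        obtain ⟨b, hb, -⟩ := hTf α (hmem α hα).1
        rw [hb, ← map_pow, ZMod.pow_card]
      · intro α hα
        obtain ⟨b, -, hb⟩ := hTf α (hmem α hα).1
        exact hb
    · have h5 : ((n * (p - (n - 1)) : ℕ) : ℤ) = (n : ℤ) * ((p : ℤ) - (n - 1)) := by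
        rw [Nat.cast_mul, Nat.cast_sub (by omega), Nat.cast_sub (by omega)]
        simp
      rw [← h5]
      exact_mod_cast htot

end

/-! ### Lifting to the `p`-adic numbers -/

theorem isAdicComplete_of_finite {R M : Type*} [CommRing R] [IsLocalRing R] [IsNoetherianRing R]
    [IsAdicComplete (IsLocalRing.maximalIdeal R) R] [AddCommGroup M] [Module R M]
    [Module.Finite R M] : IsAdicComplete (IsLocalRing.maximalIdeal R) M := by
  have hsurj : Function.Surjective (AdicCompletion.of (IsLocalRing.maximalIdeal R) M) := by
    intro y
    obtain ⟨z, rfl⟩ := AdicCompletion.ofTensorProduct_surjective_of_finite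
      (IsLocalRing.maximalIdeal R) M y
    induction z using TensorProduct.induction_on with
    | zero => exact ⟨0, by simp⟩
    | tmul r x =>
      obtain ⟨s, rfl⟩ := AdicCompletion.of_surjective (IsLocalRing.maximalIdeal R) R r
      refine ⟨s • x, ?_⟩
      rw [AdicCompletion.ofTensorProduct_tmul, map_smul]
      rfl
    | add a b ha hb =>
      obtain ⟨x, hx⟩ := ha
      obtain ⟨y, hy⟩ := hb
      exact ⟨x + y, by rw [map_add, map_add, hx, hy]⟩
  have := AdicCompletion.of_surjective_iff.mp hsurj
  exact {}

/-- An element of `ℤ_p[Y]/(g)` whose reduction is zero lies in the ideal generated by `p`. -/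
theorem ker_reduction (p : ℕ) [Fact p.Prime] (g : ℤ_[p][X]) (q : ℤ_[p][X])
    (h : g.map PadicInt.toZMod ∣ q.map PadicInt.toZMod) :
    AdjoinRoot.mk g q ∈ (IsLocalRing.maximalIdeal ℤ_[p]).map (algebraMap ℤ_[p] (AdjoinRoot g)) := by
  obtain ⟨r, hr⟩ := h
  obtain ⟨r, rfl⟩ := Polynomial.map_surjective _ (ZMod.ringHom_surjective PadicInt.toZMod) r
  have h0 : q - g * r ∈ RingHom.ker (mapRingHom (PadicInt.toZMod (p := p))) := by
    rw [RingHom.mem_ker, map_sub, map_mul]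
    simp only [coe_mapRingHom]
    rw [hr, sub_self]
  rw [Polynomial.ker_mapRingHom, PadicInt.ker_toZMod] at h0
  have h1 := Ideal.mem_map_of_mem (AdjoinRoot.mk g) h0
  rw [Ideal.map_map, map_sub, map_mul, AdjoinRoot.mk_self, zero_mul, sub_zero] at h1
  exact h1


/-- Every element of the residue field of `ℤ_p[Y]/(g)` lifts to a root of `X ^ (p ^ n) - X`, where
`n = deg g`. -/
theorem exists_teichmuller (p : ℕ) [Fact p.Prime] (g : ℤ_[p][X]) (hg : g.Monic)
    (hirr : Irreducible (g.map PadicInt.toZMod))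
    (π : AdjoinRoot g →+* AdjoinRoot (g.map (PadicInt.toZMod (p := p))))
    (hπ : ∀ q : ℤ_[p][X], π (AdjoinRoot.mk g q) = AdjoinRoot.mk _ (q.map PadicInt.toZMod))
    (c : AdjoinRoot (g.map (PadicInt.toZMod (p := p)))) :
    ∃ t : AdjoinRoot g, t ^ p ^ g.natDegree = t ∧ π t = c := by
  have hpp : p.Prime := Fact.out
  have := Fact.mk hirr
  have hnt : Nontrivial (AdjoinRoot g) := π.domain_nontrivial
  set n := g.natDegree with hn
  set I := (IsLocalRing.maximalIdeal ℤ_[p]).map (algebraMap ℤ_[p] (AdjoinRoot g)) with hI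
  have hfin : Module.Finite ℤ_[p] (AdjoinRoot g) := hg.finite_adjoinRoot
  have hcomp : IsAdicComplete (IsLocalRing.maximalIdeal ℤ_[p]) (AdjoinRoot g) :=
    isAdicComplete_of_finite
  have hcompI : IsAdicComplete I (AdjoinRoot g) :=
    { toIsHausdorff := IsHausdorff.map_algebraMap_iff.mpr hcomp.toIsHausdorff
      toIsPrecomplete := IsPrecomplete.map_algebraMap_iff.mpr hcomp.toIsPrecomplete }
  have hker : ∀ x, π x = 0 ↔ x ∈ I := by
    intro x
    constructor
    · intro hx
      obtain ⟨q, rfl⟩ := AdjoinRoot.mk_surjective x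
      rw [hπ, AdjoinRoot.mk_eq_zero] at hx
      exact ker_reduction p g q hx
    · intro hx
      rw [← RingHom.mem_ker]
      refine (Ideal.map_le_iff_le_comap.mpr ?_) hx
      intro a ha
      rw [Ideal.mem_comap, RingHom.mem_ker]
      have h1 := hπ (C a)
      have h2 : PadicInt.toZMod a = 0 := by
        rw [← PadicInt.ker_toZMod] at ha
        exact ha
      rw [map_C, h2, map_zero, map_zero] at h1
      exact h1
  have hpI : (p : AdjoinRoot g) ∈ I := by
    rw [← hker, map_natCast]
    rw [← map_natCast (algebraMap (ZMod p) _), CharP.cast_eq_zero, map_zero]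
  have hcard : c ^ p ^ n = c := by
    have hfd : Module.Finite (ZMod p) (AdjoinRoot (g.map (PadicInt.toZMod (p := p)))) :=
      (hg.map _).finite_adjoinRoot
    have : Finite (AdjoinRoot (g.map (PadicInt.toZMod (p := p)))) :=
      Module.finite_of_finite (ZMod p)
    have h1 := Module.natCard_eq_pow_finrank (K := ZMod p)
      (V := AdjoinRoot (g.map (PadicInt.toZMod (p := p))))
    have h2 : Module.finrank (ZMod p) (AdjoinRoot (g.map (PadicInt.toZMod (p := p)))) = n := by
      rw [(AdjoinRoot.powerBasis' (hg.map PadicInt.toZMod)).finrank, AdjoinRoot.powerBasis'_dim,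
        hg.natDegree_map]
    have := Fintype.ofFinite (AdjoinRoot (g.map (PadicInt.toZMod (p := p))))
    have h3 := FiniteField.pow_card c
    rwa [← Nat.card_eq_fintype_card, h1, h2, Nat.card_zmod] at h3
  obtain ⟨q, rfl⟩ := AdjoinRoot.mk_surjective c
  obtain ⟨q, rfl⟩ := Polynomial.map_surjective _ (ZMod.ringHom_surjective PadicInt.toZMod) q
  have hdeg : n ≠ 0 := by
    rw [hn, ← hg.natDegree_map (PadicInt.toZMod (p := p))]
    exact hirr.natDegree_pos.ne'
  have h1p : 1 < p ^ n := Nat.one_lt_pow hdeg hpp.one_lt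
  obtain ⟨t, ht, ht2⟩ := HenselianRing.is_henselian (I := I) (X ^ p ^ n - X : (AdjoinRoot g)[X])
    (monic_X_pow_sub (by rw [degree_X]; exact_mod_cast h1p)) (AdjoinRoot.mk g q)
    (by
      rw [← hker]
      simp only [eval_sub, eval_pow, eval_X, map_sub, map_pow, hπ]
      rw [hcard, sub_self])
    (by
      have : Ideal.Quotient.mk I (p : AdjoinRoot g) = 0 := Ideal.Quotient.eq_zero_iff_mem.mpr hpI
      simp only [derivative_X_pow, derivative_X, eval_sub, eval_mul, eval_C,
        eval_one, eval_pow, eval_X, map_sub, map_mul, map_pow, Nat.cast_pow, this, map_one,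
        zero_pow hdeg, zero_mul, zero_sub]
      exact isUnit_one.neg)
  refine ⟨t, ?_, ?_⟩
  · rw [IsRoot.def] at ht
    simpa [sub_eq_zero] using ht
  · rw [← hπ, ← sub_eq_zero, ← map_sub, hker]
    exact ht2

/-- If `h` splits in `F` and `F` is generated by a root of `h`, then `F` is a splitting field of `h`,
so generators can be transported from `F` to `E`. -/
theorem exists_root_of_splits {k E F : Type*} [Field k] [Field E] [Field F] [Algebra k E]
    [Algebra k F] (h : k[X]) (h0 : h ≠ 0) [IsSplittingField k E h]
    (hs : (h.map (algebraMap k F)).Splits) (θ : F) (hθ : aeval θ h = 0)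
    (hθtop : IntermediateField.adjoin k {θ} = ⊤) (f : k[X]) (r : F) (hr : aeval r f = 0)
    (hrtop : IntermediateField.adjoin k {r} = ⊤) :
    ∃ x : E, aeval x f = 0 ∧ IntermediateField.adjoin k {x} = ⊤ := by
  let φ : E →ₐ[k] F := IsSplittingField.lift E h hs
  have hθφ : θ ∈ φ.fieldRange := by
    have h1 : (h.map (algebraMap k E)).Splits := IsSplittingField.splits E h
    refine h1.mem_range_of_isRoot (map_ne_zero h0) (i := φ.toRingHom) ?_
    rw [map_map]
    have : φ.toRingHom.comp (algebraMap k E) = algebraMap k F := φ.comp_algebraMap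
    rw [this, IsRoot.def, eval_map_algebraMap]
    exact hθ
  have hsurj : Function.Surjective φ := by
    rw [← AlgHom.fieldRange_eq_top, eq_top_iff, ← hθtop, IntermediateField.adjoin_le_iff]
    simpa using hθφ
  obtain ⟨x, hx⟩ := hsurj r
  have hx0 : aeval x f = 0 := by
    apply RingHom.injective (φ : E →+* F)
    rw [map_zero, ← hr, ← hx]
    exact (aeval_algHom_apply φ x f).symm
  refine ⟨x, hx0, ?_⟩
  apply IntermediateField.map_injective φ
  rw [IntermediateField.adjoin_map, Set.image_singleton, hx, hrtop,
    ← AlgHom.fieldRange_eq_map, AlgHom.fieldRange_eq_top.mpr hsurj]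

set_option maxHeartbeats 1000000 in
/-- If the monic `g` is irreducible both modulo `p` and over `ℚ_p`, then `ℚ_p[Y]/(g)` is a splitting
field of `X ^ (p ^ n) - X` with `n = deg g`, so any such splitting field `E` is generated by a root
of `g`. -/
theorem splits_and_generates (p : ℕ) [Fact p.Prime] (g : ℤ_[p][X]) (hg : g.Monic)
    (hirr : Irreducible (g.map PadicInt.toZMod))
    (hirr2 : Irreducible (g.map (algebraMap ℤ_[p] ℚ_[p]))) (E : Type*) [Field E] [Algebra ℚ_[p] E]
    [hE : IsSplittingField ℚ_[p] E (X ^ p ^ g.natDegree - X : ℚ_[p][X])] :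
    ∃ x : E, aeval x (g.map (algebraMap ℤ_[p] ℚ_[p])) = 0 ∧
      IntermediateField.adjoin ℚ_[p] {x} = ⊤ := by
  classical
  have hpp : p.Prime := Fact.out
  set f := g.map (algebraMap ℤ_[p] ℚ_[p]) with hf
  have hfac := Fact.mk hirr2
  have hfac' := Fact.mk hirr
  set n := g.natDegree with hn
  have hinj : Function.Injective (algebraMap ℤ_[p] ℚ_[p]) := IsFractionRing.injective _ _
  set gb := g.map (PadicInt.toZMod (p := p)) with hgb
  have hroot : ∀ q : ℤ_[p][X], aeval (AdjoinRoot.root f) q = AdjoinRoot.mk f (q.map (algebraMap ℤ_[p] ℚ_[p])) := by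
    intro q
    rw [← AdjoinRoot.aeval_eq, aeval_map_algebraMap]
  -- the two maps out of `ℤ_p[Y]/(g)`
  obtain ⟨π, hπ⟩ : ∃ π : AdjoinRoot g →+* AdjoinRoot gb,
      ∀ q, π (AdjoinRoot.mk g q) = AdjoinRoot.mk gb (q.map PadicInt.toZMod) := by
    refine ⟨Ideal.Quotient.lift _ ((AdjoinRoot.mk gb).comp (mapRingHom PadicInt.toZMod)) ?_, ?_⟩
    · intro a ha
      rw [Ideal.mem_span_singleton] at ha
      simp only [RingHom.comp_apply, coe_mapRingHom, AdjoinRoot.mk_eq_zero]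
      exact Polynomial.map_dvd _ ha
    · intro q; rfl
  obtain ⟨ι, hι⟩ : ∃ ι : AdjoinRoot g →+* AdjoinRoot f,
      ∀ q, ι (AdjoinRoot.mk g q) = AdjoinRoot.mk f (q.map (algebraMap ℤ_[p] ℚ_[p])) := by
    refine ⟨Ideal.Quotient.lift _ ((AdjoinRoot.mk f).comp (mapRingHom (algebraMap ℤ_[p] ℚ_[p]))) ?_, ?_⟩
    · intro a ha
      rw [Ideal.mem_span_singleton] at ha
      simp only [RingHom.comp_apply, coe_mapRingHom, AdjoinRoot.mk_eq_zero]
      exact Polynomial.map_dvd _ ha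
    · intro q; rfl
  have hιinj : Function.Injective ι := by
    rw [injective_iff_map_eq_zero]
    intro a ha
    obtain ⟨q, rfl⟩ := AdjoinRoot.mk_surjective a
    rw [hι, AdjoinRoot.mk_eq_zero, hf, Polynomial.map_dvd_map _ hinj hg] at ha
    exact AdjoinRoot.mk_eq_zero.mpr ha
  choose t ht hπt using exists_teichmuller p g hg hirr π hπ
  have htinj : Function.Injective t := Function.LeftInverse.injective hπt
  have hdeg : n ≠ 0 := by
    rw [hn, ← hg.natDegree_map (PadicInt.toZMod (p := p))]
    exact hirr.natDegree_pos.ne'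
  have h1p : 1 < p ^ n := Nat.one_lt_pow hdeg hpp.one_lt
  set h : ℚ_[p][X] := X ^ p ^ n - X with hh
  have hfdeg : f.natDegree = n := hg.natDegree_map _
  have hcardk : Nat.card (AdjoinRoot gb) = p ^ n := by
    have hfd : Module.Finite (ZMod p) (AdjoinRoot gb) := (hg.map _).finite_adjoinRoot
    rw [Module.natCard_eq_pow_finrank (K := ZMod p),
      (AdjoinRoot.powerBasis' (hg.map PadicInt.toZMod)).finrank, AdjoinRoot.powerBasis'_dim,
        hg.natDegree_map, Nat.card_zmod]
  have hfinK : Module.finrank ℚ_[p] (AdjoinRoot f) = n := by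
    rw [(AdjoinRoot.powerBasis' (hg.map _)).finrank, AdjoinRoot.powerBasis'_dim,
        hg.natDegree_map]
  have : Finite (AdjoinRoot gb) := Nat.finite_of_card_ne_zero (by rw [hcardk]; positivity)
  have := Fintype.ofFinite (AdjoinRoot gb)
  have hmap : h.map (algebraMap ℚ_[p] (AdjoinRoot f)) = X ^ p ^ n - X := by simp [hh]
  have hne : (X ^ p ^ n - X : (AdjoinRoot f)[X]) ≠ 0 :=
    FiniteField.X_pow_card_sub_X_ne_zero _ h1p
  have htroot : ∀ c, (ι (t c)) ^ p ^ n = ι (t c) := fun c => by rw [← map_pow, ht]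
  have hsplit : (h.map (algebraMap ℚ_[p] (AdjoinRoot f))).Splits := by
    rw [splits_iff_card_roots, hmap]
    refine le_antisymm (card_roots' _) ?_
    rw [FiniteField.X_pow_card_sub_X_natDegree_eq _ h1p]
    have h1 : (Finset.univ.image fun c => ι (t c)) ⊆
        (X ^ p ^ n - X : (AdjoinRoot f)[X]).roots.toFinset := by
      intro y hy
      obtain ⟨c, -, rfl⟩ := Finset.mem_image.mp hy
      rw [Multiset.mem_toFinset, mem_roots hne]
      simp [htroot]
    have h2 := Finset.card_le_card h1
    rw [Finset.card_image_of_injective _ (f := fun c => ι (t c)) (hιinj.comp htinj), Finset.card_univ,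
      Fintype.card_eq_nat_card, hcardk] at h2
    exact h2.trans (Multiset.toFinset_card_le _)
  -- `θ` generates since its minimal polynomial over `ℤ_p` reduces to a multiple of that of its residue
  set θ := ι (t (AdjoinRoot.root gb)) with hθ
  have hθtop : IntermediateField.adjoin ℚ_[p] {θ} = ⊤ := by
    have hfd : FiniteDimensional ℚ_[p] (AdjoinRoot f) := (hg.map _).finite_adjoinRoot
    have hint : IsIntegral ℤ_[p] θ := by
      refine ⟨X ^ p ^ n - X, monic_X_pow_sub (by rw [degree_X]; exact_mod_cast h1p), ?_⟩
      simp [hθ, htroot]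
    have hint' : IsIntegral ℚ_[p] θ := Algebra.IsIntegral.isIntegral _
    refine IntermediateField.eq_of_le_of_finrank_le le_top ?_
    rw [IntermediateField.finrank_top', hfinK, IntermediateField.adjoin.finrank hint',
      minpoly.isIntegrallyClosed_eq_field_fractions' ℚ_[p] hint,
      (minpoly.monic hint).natDegree_map]
    set m := minpoly ℤ_[p] θ with hm
    have hm0 : aeval θ m = 0 := minpoly.aeval _ _
    have hm1 : aeval (t (AdjoinRoot.root gb)) m = 0 := by
      apply hιinj
      rw [map_zero, ← hm0, aeval_def, hom_eval₂, aeval_def]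
      congr 1
      ext a
      have h1 := hι (C a)
      rw [map_C] at h1
      exact h1
    have hm2 : gb ∣ m.map PadicInt.toZMod := by
      have h1 := congrArg π hm1
      rw [map_zero, aeval_def, hom_eval₂, hπt] at h1
      rw [← AdjoinRoot.mk_eq_zero, ← AdjoinRoot.aeval_eq, aeval_def, eval₂_map, ← h1]
      congr 1
      ext a
      have h1 := hπ (C a)
      rw [map_C] at h1
      exact h1.symm
    have := natDegree_le_of_dvd hm2 ((minpoly.monic hint).map _).ne_zero
    rwa [(minpoly.monic hint).natDegree_map, hgb, hg.natDegree_map] at this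
  have hθh : aeval θ h = 0 := by
    simp only [hh, map_sub, map_pow, aeval_X]
    rw [hθ, htroot, sub_self]
  exact exists_root_of_splits h (FiniteField.X_pow_card_sub_X_ne_zero _ h1p) hsplit θ hθh hθtop f
    (AdjoinRoot.root f) (by rw [AdjoinRoot.aeval_eq, AdjoinRoot.mk_self])
    (IntermediateField.adjoin_root_eq_top f)

end Trinom

theorem stmt_10 (n : ℕ) (hn : 2 ≤ n) (p : ℕ) [Fact p.Prime]
    (hp : (2 * n * n.factorial) ^ 2 ≤ p) :
    ∃ b : ℤ_[p], Irreducible ((X : Polynomial ℚ_[p]) ^ n - X + C (b : ℚ_[p])) ∧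
      ∃ x : UnramifiedExt p n,
        Polynomial.aeval x ((X : Polynomial ℚ_[p]) ^ n - X + C (b : ℚ_[p])) = 0 ∧
        IntermediateField.adjoin ℚ_[p] {x} = ⊤ := by
  obtain ⟨c, hc⟩ := Trinom.exists_irreducible_zmod p hn hp
  obtain ⟨b, hb⟩ := ZMod.ringHom_surjective (PadicInt.toZMod (p := p)) (-c)
  set g : ℤ_[p][X] := X ^ n - X + C b with hg
  have hg' : g = X ^ n - (X - C b) := by rw [hg]; ring
  have hlt : (X - C b).degree < ((n : ℕ) : WithBot ℕ) := by
    rw [degree_X_sub_C]; exact_mod_cast hn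
  have hmon : g.Monic := hg' ▸ monic_X_pow_sub hlt
  have hdeg : g.natDegree = n := by
    rw [hg', natDegree_sub_eq_left_of_natDegree_lt, natDegree_X_pow]
    rw [natDegree_X_pow, natDegree_X_sub_C]
    exact hn
  have hred : Irreducible (g.map PadicInt.toZMod) := by
    convert hc using 1
    simp only [hg, Polynomial.map_add, Polynomial.map_sub, Polynomial.map_pow, map_X, map_C, hb,
      C_neg]
    ring
  have hirr : Irreducible (g.map (algebraMap ℤ_[p] ℚ_[p])) :=
    (hmon.irreducible_iff_irreducible_map_fraction_map).mp
      (hmon.irreducible_of_irreducible_map _ _ hred)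
  have hmap : g.map (algebraMap ℤ_[p] ℚ_[p]) = X ^ n - X + C (b : ℚ_[p]) := by
    simp only [hg, Polynomial.map_add, Polynomial.map_sub, Polynomial.map_pow, map_X, map_C]
    rfl
  have hE : IsSplittingField ℚ_[p] (UnramifiedExt p n) (X ^ p ^ g.natDegree - X : ℚ_[p][X]) := by
    rw [hdeg]
    exact inferInstanceAs (IsSplittingField ℚ_[p]
      ((X : Polynomial ℚ_[p]) ^ (p ^ n) - X).SplittingField (X ^ p ^ n - X : ℚ_[p][X]))
  have hx := Trinom.splits_and_generates p g hmon hred hirr (UnramifiedExt p n)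
  rw [hmap] at hx
  rw [hmap] at hirr
  exact ⟨b, hirr, hx⟩
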